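/- arXiv:1308.0454 — 3 statements merged into one kernel-verified Lean document; each statement's English description precedes it below -/
import Mathlib

section
/- Let W be a signed tropical m×(n+1) matrix and let x ∈ ℝ^{n+1}. Suppose the tangent graph G_x(W) contains a matching between hyperplane nodes I = {i_1,…,i_q} and coordinate nodes J = {j_1,…,j_q}, i.e., the edge between i_p and j_p belongs to G_x(W) for each p ∈ [q] and the i_p are pairwise distinct and the j_p are pairwise distinct. Then the q×q submatrix W' of W with rows I and columns J satisfies tper(|W'|) = Σ_{p=1}^q |W|_{i_p j_p} > −∞, and this maximum in the tropical permanent is attained by the bijection i_p ↦ j_p. -/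
open scoped Classical

noncomputable section

/-- The tropical semiring `ℝ ∪ {−∞}` with max as addition, + as multiplication. -/
abbrev TT : Type := WithBot ℝ

/-- Tropical dot product `max_j (a j + x j)`. -/
def tdot {n : ℕ} (a x : Fin n → TT) : TT :=
  Finset.univ.sup fun j => a j + x j

/-- Tropical permanent of a square matrix over `TT`. -/
def tper {q : ℕ} (M : Fin q → Fin q → TT) : TT :=
  Finset.univ.sup fun σ : Equiv.Perm (Fin q) => ∑ i, M i (σ i)

/-- A square tropical matrix is tropically singular. -/
def TropSingular {q : ℕ} (M : Fin q → Fin q → TT) : Prop :=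
  tper M = ⊥ ∨ ∃ σ π : Equiv.Perm (Fin q), σ ≠ π ∧
    (∑ i, M i (σ i)) = tper M ∧ (∑ i, M i (π i)) = tper M

/-- An (unsigned) tropical matrix is tropically generic. -/
def TropGeneric {m n : ℕ} (M : Fin m → Fin n → TT) : Prop :=
  ∀ (q : ℕ) (r : Fin q → Fin m) (c : Fin q → Fin n),
    Function.Injective r → Function.Injective c →
    tper (fun i j => M (r i) (c j)) = ⊥ ∨ ¬ TropSingular (fun i j => M (r i) (c j))

/-- sign of an entry of a signed tropical matrix. -/
def esign (ap an : TT) : ℤ :=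
  if ap ≠ ⊥ then 1 else if an ≠ ⊥ then -1 else 0

/-- A signed square tropical matrix (pair of matrices) is tropically sign singular. -/
def TropSignSingular {q : ℕ} (Mp Mn : Fin q → Fin q → TT) : Prop :=
  tper (fun i j => max (Mp i j) (Mn i j)) = ⊥ ∨
  ∃ σ π : Equiv.Perm (Fin q),
    (∑ i, max (Mp i (σ i)) (Mn i (σ i))) = tper (fun i j => max (Mp i j) (Mn i j)) ∧
    (∑ i, max (Mp i (π i)) (Mn i (π i))) = tper (fun i j => max (Mp i j) (Mn i j)) ∧
    ((Equiv.Perm.sign σ : ℤ) * ∏ i, esign (Mp i (σ i)) (Mn i (σ i)))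
      ≠ ((Equiv.Perm.sign π : ℤ) * ∏ i, esign (Mp i (π i)) (Mn i (π i)))

/-- A signed tropical matrix is tropically sign generic. -/
def TropSignGeneric {m n : ℕ} (Mp Mn : Fin m → Fin n → TT) : Prop :=
  ∀ (q : ℕ) (r : Fin q → Fin m) (c : Fin q → Fin n),
    Function.Injective r → Function.Injective c →
    tper (fun i j => max (Mp (r i) (c j)) (Mn (r i) (c j))) = ⊥ ∨
    ¬ TropSignSingular (fun i j => Mp (r i) (c j)) (fun i j => Mn (r i) (c j))

/-- Tropical polyhedron `P(A,b)` given by a signed matrix/vector. -/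
def tropP {m n : ℕ} (Ap An : Fin m → Fin n → TT) (bp bn : Fin m → TT) :
    Set (Fin n → TT) :=
  {x | ∀ i, max (tdot (An i) x) (bn i) ≤ max (tdot (Ap i) x) (bp i)}


section Tangent

variable {m n : ℕ} (Wp Wn : Fin m → Fin (n + 1) → TT)

/-- Real vector viewed inside `T^{n+1}`. -/
def toT (x : Fin (n + 1) → ℝ) : Fin (n + 1) → TT := fun j => (x j : TT)

/-- Modulus of the signed matrix `W`. -/
def tmod : Fin m → Fin (n + 1) → TT := fun i j => max (Wp i j) (Wn i j)

/-- `i` is a hyperplane node of the tangent graph at `x`. -/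
def isHypNode (x : Fin (n + 1) → ℝ) (i : Fin m) : Prop :=
  tdot (Wp i) (toT x) = tdot (Wn i) (toT x) ∧ ⊥ < tdot (Wp i) (toT x)

/-- There is an edge between hyperplane node `i` and coordinate node `j`
in the tangent graph at `x`. -/
def isTEdge (x : Fin (n + 1) → ℝ) (i : Fin m) (j : Fin (n + 1)) : Prop :=
  isHypNode Wp Wn x i ∧ tmod Wp Wn i j + (x j : TT) = tdot (tmod Wp Wn i) (toT x)

/-- Vertices of the tangent (di)graph: hyperplane nodes on the left,
coordinate nodes on the right. -/
abbrev TGV (m n : ℕ) : Type := Sum (Fin m) (Fin (n + 1))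

/-- The (undirected) tangent graph at `x`. -/
def tangentGraph (x : Fin (n + 1) → ℝ) : SimpleGraph (TGV m n) :=
  SimpleGraph.fromRel fun u v =>
    match u, v with
    | Sum.inl i, Sum.inr j => isTEdge Wp Wn x i j
    | _, _ => False

/-- The arc relation of the tangent digraph at `x`: the edge between `i` and
`j` is directed from `j` to `i` when `W_{ij}` is tropically positive, and from
`i` to `j` when it is tropically negative. -/
def arcRel (x : Fin (n + 1) → ℝ) : TGV m n → TGV m n → Prop := fun u v =>
  match u, v with
  | Sum.inr j, Sum.inl i => isTEdge Wp Wn x i j ∧ Wp i j ≠ ⊥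
  | Sum.inl i, Sum.inr j => isTEdge Wp Wn x i j ∧ Wn i j ≠ ⊥
  | _, _ => False

end Tangent

/-!
Tropically scaling column `j` by `x j` adds the same constant to the weight of every permutation of
a square submatrix. After the scaling, each entry of the matching is a maximum of its row, so no
permutation can beat the matching.
-/

lemma sum_apply_perm_le_sum_diag_of_forall_add_le {ι α : Type*} [Fintype ι] [AddCommMonoid α]
    [PartialOrder α] [IsOrderedCancelAddMonoid α] (M : ι → ι → WithBot α) (x : ι → α)
    (hdiag : ∀ a b, M a b + x b ≤ M a a + x a) (σ : Equiv.Perm ι) :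
    ∑ a, M a (σ a) ≤ ∑ a, M a a := by
  have sum_coe_ne_bot : ∑ a, (x a : WithBot α) ≠ ⊥ := by
    simp [WithBot.sum_eq_bot_iff]
  refine (WithBot.add_le_add_iff_right sum_coe_ne_bot).mp ?_
  calc ∑ a, M a (σ a) + ∑ a, (x a : WithBot α)
      = ∑ a, (M a (σ a) + x (σ a)) := by
        rw [Finset.sum_add_distrib, Equiv.sum_comp σ fun a => (x a : WithBot α)]
    _ ≤ ∑ a, (M a a + x a) := Finset.sum_le_sum fun a _ => hdiag a (σ a)
    _ = ∑ a, M a a + ∑ a, (x a : WithBot α) := Finset.sum_add_distrib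

lemma sum_apply_perm_le_tper {q : ℕ} (M : Fin q → Fin q → TT) (σ : Equiv.Perm (Fin q)) :
    ∑ a, M a (σ a) ≤ tper M :=
  Finset.le_sup (f := fun σ : Equiv.Perm (Fin q) => ∑ a, M a (σ a)) (Finset.mem_univ σ)

lemma tper_eq_sum_diag_of_forall_add_le {q : ℕ} (M : Fin q → Fin q → TT) (x : Fin q → ℝ)
    (hdiag : ∀ a b, M a b + x b ≤ M a a + x a) : tper M = ∑ a, M a a :=
  le_antisymm (Finset.sup_le fun σ _ => sum_apply_perm_le_sum_diag_of_forall_add_le M x hdiag σ)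
    (sum_apply_perm_le_tper M 1)

lemma add_le_tdot {n : ℕ} (a x : Fin n → TT) (j : Fin n) : a j + x j ≤ tdot a x :=
  Finset.le_sup (f := fun j => a j + x j) (Finset.mem_univ j)

lemma tdot_mono_left {n : ℕ} {a b : Fin n → TT} (hab : a ≤ b) (x : Fin n → TT) :
    tdot a x ≤ tdot b x :=
  Finset.sup_mono_fun fun j _ => add_le_add_left (hab j) (x j)

lemma isHypNode.bot_lt_tdot_tmod {m n : ℕ} {Wp Wn : Fin m → Fin (n + 1) → TT}
    {x : Fin (n + 1) → ℝ} {i : Fin m} (hi : isHypNode Wp Wn x i) :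
    ⊥ < tdot (tmod Wp Wn i) (toT x) :=
  hi.2.trans_le (tdot_mono_left (fun _ => le_max_left _ _) (toT x))

theorem stmt2_general {m n : ℕ} (M : Fin m → Fin (n + 1) → TT) (x : Fin (n + 1) → ℝ)
    {q : ℕ} (r : Fin q → Fin m) (c : Fin q → Fin (n + 1))
    (hfin : ∀ p, ⊥ < tdot (M (r p)) (toT x))
    (hmax : ∀ p, M (r p) (c p) + (x (c p) : TT) = tdot (M (r p)) (toT x)) :
    tper (fun a b => M (r a) (c b)) = ∑ p, M (r p) (c p) ∧ ⊥ < ∑ p, M (r p) (c p) := by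
  constructor
  · exact tper_eq_sum_diag_of_forall_add_le (fun a b => M (r a) (c b)) (fun a => x (c a))
      fun a b => (add_le_tdot (M (r a)) (toT x) (c b)).trans_eq (hmax a).symm
  · refine WithBot.bot_lt_sum_iff.mpr fun p _ => ?_
    have scaled_entry_finite : ⊥ < M (r p) (c p) + (x (c p) : TT) := hmax p ▸ hfin p
    exact (WithBot.bot_lt_add.mp scaled_entry_finite).1

/-- A matching in the tangent graph between hyperplane nodes
`I = {i₁,…,i_q}` and coordinate nodes `J = {j₁,…,j_q}` yields a finite tropical
permanent for the corresponding submatrix of `|W|`, attained by the bijection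
`i_p ↦ j_p`. -/
theorem stmt2 {m n : ℕ} (Wp Wn : Fin m → Fin (n + 1) → TT)
    (hsign : ∀ i j, min (Wp i j) (Wn i j) = ⊥)
    (x : Fin (n + 1) → ℝ)
    (q : ℕ) (r : Fin q → Fin m) (c : Fin q → Fin (n + 1))
    (hr : Function.Injective r) (hc : Function.Injective c)
    (hmatch : ∀ p, isTEdge Wp Wn x (r p) (c p)) :
    tper (fun a b => tmod Wp Wn (r a) (c b)) = ∑ p, tmod Wp Wn (r p) (c p) ∧
    ⊥ < ∑ p, tmod Wp Wn (r p) (c p) :=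
  stmt2_general (tmod Wp Wn) x r c (fun p => (hmatch p).1.bot_lt_tdot_tmod)
    fun p => (hmatch p).2
end
end

section
/- Let W be a signed tropical m×(n+1) matrix and let x ∈ ℝ^{n+1}. If the tangent digraph D_x(W) contains a directed cycle, then W has a square submatrix W' with tper(|W'|) > −∞ that is tropically sign singular. In particular, if W is tropically sign generic then D_x(W) is acyclic. -/
open scoped Classical

noncomputable section

/-!
A shortest closed walk among the coordinate nodes, where one step `j → i → j'` passes through a
hyperplane node, has no chords. Hence neither its coordinate nodes nor its hyperplane nodes repeat,
and they select a square submatrix whose diagonal entries are positive and whose cyclically shifted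
diagonal entries are negative. All these entries attain the row maxima of `|W|_{ij} + x_j`, so `x`
is a dual certificate that both the identity and the rotation attain the tropical permanent. The
identity has sign `1`, while the rotation of `q + 1` indices has sign
`(-1) ^ q * (-1) ^ (q + 1) = -1`.
-/

section ClosedWalk

variable {α : Type*} {R : α → α → Prop}

/-- `p` lists the vertices of a closed walk of length `q + 1` in the digraph `R`; the index `k + 1`
is taken cyclically in `Fin (q + 1)`. -/
def IsClosedWalk (R : α → α → Prop) {q : ℕ} (p : Fin (q + 1) → α) : Prop :=
  ∀ k, R (p k) (p (k + 1))

/-- The closed walk `p` is chordless: the only arcs of `R` between its vertices are its own steps.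
Since the condition is on indices rather than vertices, it also excludes repeated vertices. -/
def IsChordless (R : α → α → Prop) {q : ℕ} (p : Fin (q + 1) → α) : Prop :=
  ∀ k l, R (p k) (p l) → l = k + 1

lemma exists_walk_of_transGen {a b : α} (h : Relation.TransGen R a b) :
    ∃ (q : ℕ) (p : Fin (q + 1) → α),
      p 0 = a ∧ R (p (Fin.last q)) b ∧ ∀ k : Fin q, R (p k.castSucc) (p k.succ) := by
  induction h using Relation.TransGen.head_induction_on with
  | @single a hab => exact ⟨0, fun _ => a, rfl, hab, fun k => k.elim0⟩
  | @head a c hac _ ih =>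
    obtain ⟨q, p, rfl, hlast, hstep⟩ := ih
    refine ⟨q + 1, Fin.cons a p, rfl, by simpa [← Fin.succ_last] using hlast, fun k => ?_⟩
    cases k using Fin.cases with
    | zero => simpa using hac
    | succ k => simpa [← Fin.succ_castSucc] using hstep k

lemma exists_isClosedWalk_of_transGen {a : α} (h : Relation.TransGen R a a) :
    ∃ (q : ℕ) (p : Fin (q + 1) → α), IsClosedWalk R p := by
  obtain ⟨q, p, rfl, hlast, hstep⟩ := exists_walk_of_transGen h
  refine ⟨q, p, fun k => ?_⟩
  cases k using Fin.lastCases with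
  | last => simpa using hlast
  | cast k => simpa using hstep k

open Fin.NatCast in
-- The chord from `p k` to `p l` closes up the stretch `p l, p (l + 1), …, p k` of the walk.
lemma IsClosedWalk.shortcut {q : ℕ} {p : Fin (q + 1) → α} (hp : IsClosedWalk R p)
    {k l : Fin (q + 1)} (hkl : R (p k) (p l)) :
    IsClosedWalk R fun t : Fin ((k - l).val + 1) => p (l + (t.val : Fin (q + 1))) := by
  intro t
  cases t using Fin.lastCases with
  | last => simpa using hkl
  | cast t => simpa [add_assoc] using hp (l + (t.val : Fin (q + 1)))

lemma exists_chordless_isClosedWalk {a : α} (h : Relation.TransGen R a a) :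
    ∃ (q : ℕ) (p : Fin (q + 1) → α), IsClosedWalk R p ∧ IsChordless R p := by
  have hwalk := exists_isClosedWalk_of_transGen h
  obtain ⟨p, hp⟩ := Nat.find_spec hwalk
  refine ⟨Nat.find hwalk, p, hp, fun k l hkl => ?_⟩
  have hlong : Nat.find hwalk ≤ (k - l).val := Nat.find_min' hwalk ⟨_, hp.shortcut hkl⟩
  have hlast : k - l = Fin.last _ := Fin.last_le_iff.mp hlong
  exact (sub_eq_zero.mp (by rw [add_sub_right_comm, hlast, Fin.last_add_one])).symm

lemma IsClosedWalk.injective {q : ℕ} {p : Fin (q + 1) → α} (hp : IsClosedWalk R p)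
    (hc : IsChordless R p) : Function.Injective p := fun k l hkl =>
  add_right_cancel (hc l (k + 1) (hkl ▸ hp k))

end ClosedWalk

section Bipartite

variable {α β : Type*} {r : α ⊕ β → α ⊕ β → Prop}

/-- Two consecutive arcs of a digraph on `α ⊕ β`, leading from `β` to `β` through `α`. Its
chordless closed walks repeat no vertex in `α` either, as a repeated one would give a chord. -/
def twoStep (r : α ⊕ β → α ⊕ β → Prop) (j j' : β) : Prop :=
  ∃ i, r (.inr j) (.inl i) ∧ r (.inl i) (.inr j')

lemma twoStep_reachable_of_transGen (hα : ∀ i i', ¬ r (.inl i) (.inl i'))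
    (hβ : ∀ j j', ¬ r (.inr j) (.inr j')) {j : β} {w : α ⊕ β}
    (h : Relation.TransGen r (.inr j) w) :
    Sum.elim (fun i => ∃ k, Relation.ReflTransGen (twoStep r) j k ∧ r (.inr k) (.inl i))
      (fun k => Relation.TransGen (twoStep r) j k) w := by
  induction h with
  | @single w hjw =>
    rcases w with i | k
    · exact ⟨j, .refl, hjw⟩
    · exact (hβ j k hjw).elim
  | @tail u w _ huw ih =>
    rcases u with i | k <;> rcases w with i' | k'
    · exact (hα i i' huw).elim
    · obtain ⟨k, hjk, hki⟩ := ih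
      exact .tail' hjk ⟨i, hki, huw⟩
    · exact ⟨k, ih.to_reflTransGen, huw⟩
    · exact (hβ k k' huw).elim

lemma exists_transGen_twoStep_of_transGen (hα : ∀ i i', ¬ r (.inl i) (.inl i'))
    (hβ : ∀ j j', ¬ r (.inr j) (.inr j')) {v : α ⊕ β} (h : Relation.TransGen r v v) :
    ∃ j, Relation.TransGen (twoStep r) j j := by
  suffices hcycle : ∃ j, Relation.TransGen r (.inr j) (.inr j) from
    hcycle.imp fun j hj => twoStep_reachable_of_transGen (w := .inr j) hα hβ hj
  rcases v with i | j
  · obtain ⟨w, hiw, hwi⟩ := Relation.TransGen.head'_iff.mp h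
    rcases w with i' | j
    · exact (hα i i' hiw).elim
    · exact ⟨j, .tail' hwi hiw⟩
  · exact ⟨j, h⟩

lemma exists_alternating_cycle_of_transGen_twoStep {j : β}
    (h : Relation.TransGen (twoStep r) j j) :
    ∃ (q : ℕ) (row : Fin (q + 1) → α) (col : Fin (q + 1) → β),
      Function.Injective row ∧ Function.Injective col ∧
      (∀ a, r (.inr (col a)) (.inl (row a))) ∧ ∀ a, r (.inl (row a)) (.inr (col (a + 1))) := by
  obtain ⟨q, col, hwalk, hchordless⟩ := exists_chordless_isClosedWalk h
  choose row hin hout using hwalk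
  have hrow : Function.Injective row := fun a b hab =>
    add_right_cancel (hchordless b (a + 1) ⟨row b, hin b, hab ▸ hout a⟩)
  exact ⟨q, row, col, hrow, IsClosedWalk.injective (fun a => ⟨row a, hin a, hout a⟩) hchordless,
    hin, hout⟩

end Bipartite

section SignSingular

lemma esign_of_pos {ap : TT} (hp : ap ≠ ⊥) (an : TT) : esign ap an = 1 :=
  if_pos hp

lemma esign_of_neg {ap an : TT} (hmin : min ap an = ⊥) (hn : an ≠ ⊥) : esign ap an = -1 := by
  have hp : ap = ⊥ := (min_eq_bot.mp hmin).resolve_right hn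
  rw [esign, if_neg (not_not.mpr hp), if_pos hn]

-- The weight of any permutation plus `∑ b, y b` is at most `∑ a, T a`, with equality at `σ`.
lemma sum_eq_tper_of_dual_tight {q : ℕ} {M : Fin q → Fin q → TT} {y : Fin q → ℝ} {T : Fin q → TT}
    (hle : ∀ a b, M a b + (y b : TT) ≤ T a) {σ : Equiv.Perm (Fin q)}
    (hσ : ∀ a, M a (σ a) + (y (σ a) : TT) = T a) :
    ∑ a, M a (σ a) = tper M := by
  refine le_antisymm (Finset.le_sup (f := fun τ : Equiv.Perm (Fin q) => ∑ a, M a (τ a))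
    (Finset.mem_univ σ)) (Finset.sup_le fun τ _ => ?_)
  have weight_add (τ : Equiv.Perm (Fin q)) :
      ∑ a, M a (τ a) + ((∑ b, y b : ℝ) : TT) = ∑ a, (M a (τ a) + (y (τ a) : TT)) := by
    rw [Finset.sum_add_distrib, Equiv.sum_comp τ fun b => (y b : TT), WithBot.coe_sum]
  have hweight : ∑ a, M a (τ a) + ((∑ b, y b : ℝ) : TT)
      ≤ ∑ a, M a (σ a) + ((∑ b, y b : ℝ) : TT) :=
    calc ∑ a, M a (τ a) + ((∑ b, y b : ℝ) : TT)
        = ∑ a, (M a (τ a) + (y (τ a) : TT)) := weight_add τ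
      _ ≤ ∑ a, T a := Finset.sum_le_sum fun a _ => hle a (τ a)
      _ = ∑ a, (M a (σ a) + (y (σ a) : TT)) := by simp only [hσ]
      _ = ∑ a, M a (σ a) + ((∑ b, y b : ℝ) : TT) := (weight_add σ).symm
  exact WithBot.le_of_add_le_add_right WithBot.coe_ne_bot hweight

lemma tropSignSingular_of_optimal_one_finRotate {q : ℕ} {Mp Mn : Fin (q + 1) → Fin (q + 1) → TT}
    (hsign : ∀ a b, min (Mp a b) (Mn a b) = ⊥)
    (hpos : ∀ a, Mp a a ≠ ⊥) (hneg : ∀ a, Mn a (a + 1) ≠ ⊥)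
    (hone : ∑ a, max (Mp a a) (Mn a a) = tper fun a b => max (Mp a b) (Mn a b))
    (hrot : ∑ a, max (Mp a (finRotate _ a)) (Mn a (finRotate _ a)) =
      tper fun a b => max (Mp a b) (Mn a b)) :
    TropSignSingular Mp Mn := by
  refine Or.inr ⟨1, finRotate (q + 1), hone, hrot, ?_⟩
  have prod_diagonal : ∏ a, esign (Mp a a) (Mn a a) = 1 := by
    simp [esign_of_pos (hpos _)]
  have sign_rot : (Equiv.Perm.sign (finRotate (q + 1)) : ℤ) *
      ∏ a, esign (Mp a (finRotate _ a)) (Mn a (finRotate _ a)) = -1 := by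
    simp [esign_of_neg (hsign _ _) (hneg _), sign_finRotate, pow_succ, ← mul_pow]
  rw [sign_rot, Equiv.Perm.sign_one]
  simp [prod_diagonal]

end SignSingular

section TangentDigraph

variable {m n : ℕ} {Wp Wn : Fin m → Fin (n + 1) → TT} {x : Fin (n + 1) → ℝ}

lemma sum_tmod_eq_tper_of_isTEdge {q : ℕ} {row : Fin q → Fin m} {col : Fin q → Fin (n + 1)}
    {σ : Equiv.Perm (Fin q)} (hσ : ∀ a, isTEdge Wp Wn x (row a) (col (σ a))) :
    ∑ a, tmod Wp Wn (row a) (col (σ a)) = tper fun a b => tmod Wp Wn (row a) (col b) :=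
  sum_eq_tper_of_dual_tight (M := fun a b => tmod Wp Wn (row a) (col b))
    (y := fun b => x (col b)) (T := fun a => tdot (tmod Wp Wn (row a)) (toT x))
    (fun a b => Finset.le_sup (f := fun j => tmod Wp Wn (row a) j + toT x j)
      (Finset.mem_univ (col b)))
    fun a => (hσ a).2

lemma exists_alternating_cycle_of_transGen_arcRel {v : TGV m n}
    (hv : Relation.TransGen (arcRel Wp Wn x) v v) :
    ∃ (q : ℕ) (row : Fin (q + 1) → Fin m) (col : Fin (q + 1) → Fin (n + 1)),
      Function.Injective row ∧ Function.Injective col ∧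
      (∀ a, isTEdge Wp Wn x (row a) (col a) ∧ Wp (row a) (col a) ≠ ⊥) ∧
      ∀ a, isTEdge Wp Wn x (row a) (col (a + 1)) ∧ Wn (row a) (col (a + 1)) ≠ ⊥ := by
  obtain ⟨j, hj⟩ := exists_transGen_twoStep_of_transGen (fun _ _ h => h) (fun _ _ h => h) hv
  exact exists_alternating_cycle_of_transGen_twoStep hj

lemma exists_tropSignSingular_submatrix_of_transGen_arcRel
    (hsign : ∀ i j, min (Wp i j) (Wn i j) = ⊥) {v : TGV m n}
    (hv : Relation.TransGen (arcRel Wp Wn x) v v) :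
    ∃ (q : ℕ) (row : Fin q → Fin m) (col : Fin q → Fin (n + 1)),
      Function.Injective row ∧ Function.Injective col ∧
      ⊥ < tper (fun a b => tmod Wp Wn (row a) (col b)) ∧
      TropSignSingular (fun a b => Wp (row a) (col b)) (fun a b => Wn (row a) (col b)) := by
  obtain ⟨q, row, col, hrow, hcol, hpos, hneg⟩ := exists_alternating_cycle_of_transGen_arcRel hv
  have hone : ∑ a, tmod Wp Wn (row a) (col a) = tper fun a b => tmod Wp Wn (row a) (col b) :=
    sum_tmod_eq_tper_of_isTEdge (σ := 1) fun a => (hpos a).1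
  have hrot : ∑ a, tmod Wp Wn (row a) (col (finRotate _ a)) =
      tper fun a b => tmod Wp Wn (row a) (col b) :=
    sum_tmod_eq_tper_of_isTEdge fun a => by simpa using (hneg a).1
  refine ⟨q + 1, row, col, hrow, hcol, ?_, tropSignSingular_of_optimal_one_finRotate
    (fun a b => hsign (row a) (col b)) (fun a => (hpos a).2) (fun a => (hneg a).2) hone hrot⟩
  rw [← hone, bot_lt_iff_ne_bot, Ne, WithBot.sum_eq_bot_iff]
  rintro ⟨a, -, ha⟩
  exact (hpos a).2 (max_eq_bot.mp ha).1

end TangentDigraph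

/-- If the tangent digraph at a finite point contains a
directed cycle, then `W` has a square submatrix `W'` with `tper(|W'|) > −∞`
that is tropically sign singular. In particular, if `W` is tropically sign
generic then the tangent digraph is acyclic. -/
theorem stmt4 {m n : ℕ} (Wp Wn : Fin m → Fin (n + 1) → TT)
    (hsign : ∀ i j, min (Wp i j) (Wn i j) = ⊥)
    (x : Fin (n + 1) → ℝ) :
    ((∃ v : TGV m n, Relation.TransGen (arcRel Wp Wn x) v v) →
      ∃ (q : ℕ) (r : Fin q → Fin m) (c : Fin q → Fin (n + 1)),
        Function.Injective r ∧ Function.Injective c ∧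
        ⊥ < tper (fun a b => tmod Wp Wn (r a) (c b)) ∧
        TropSignSingular (fun a b => Wp (r a) (c b)) (fun a b => Wn (r a) (c b))) ∧
    (TropSignGeneric Wp Wn → ∀ v : TGV m n, ¬ Relation.TransGen (arcRel Wp Wn x) v v) := by
  refine ⟨fun ⟨_, hv⟩ => exists_tropSignSingular_submatrix_of_transGen_arcRel hsign hv,
    fun hgeneric v hv => ?_⟩
  obtain ⟨q, row, col, hrow, hcol, htper, hsingular⟩ :=
    exists_tropSignSingular_submatrix_of_transGen_arcRel hsign hv
  exact (hgeneric q row col hrow hcol).elim htper.ne' fun hns => hns hsingular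
end
end

section
/- Let x ∈ ℝ^{n+1} be a representative of a point of the tropical edge E_K. Then exactly one of the following three cases arises. (C1) x is the tropical basic point x^{K∪{ℓ}} for some ℓ ∈ [m]∖K; the tangent graph G_x is a tree spanning all coordinate nodes [n+1] and the hyperplane nodes K∪{ℓ}; in the tangent digraph D_x every hyperplane node has exactly one incoming and one outgoing arc; and, letting J be the set of coordinate nodes weakly connected to the unique element of argmax_j(W⁺_{ℓj}+x_j) in D_x with the node ℓ and its incident arcs deleted, e^J is the unique feasible direction from x in E_K. (C2) x lies in the relative interior of an ordinary segment of E_K; G_x is a forest with exactly two connected components whose hyperplane node set is K; every hyperplane node has exactly one incoming and one outgoing arc in D_x; and, letting J be the set of coordinate nodes of one of the two components, the feasible directions from x in E_K are exactly e^J and e^{[n+1]∖J}. (C3) x is a breakpoint of E_K; G_x is a tree spanning [n+1] and K; in D_x exactly one hyperplane node k has degree (2,1) or (1,2) and every other hyperplane node has degree (1,1); and, letting a and a' be the two arcs incident to k having the same orientation and letting J (resp. J') be the set of coordinate nodes weakly connected to k in D_x with a (resp. a') deleted, the feasible directions from x in E_K are exactly e^J and e^{J'}. -/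
open scoped Classical

noncomputable section

section Pivot

variable {m n : ℕ}

/-- The tropical cone `C = {x : Wᵢ⁺⊙x ≥ Wᵢ⁻⊙x for all i}`. -/
def coneC (Wp Wn : Fin m → Fin (n + 1) → TT) : Set (Fin (n + 1) → TT) :=
  {x | ∀ i, tdot (Wn i) x ≤ tdot (Wp i) x}

/-- The `i`-th s-hyperplane `Hᵢ`. -/
def hypHS (Wp Wn : Fin m → Fin (n + 1) → TT) (i : Fin m) : Set (Fin (n + 1) → TT) :=
  {x | tdot (Wp i) x = tdot (Wn i) x}

/-- The `i`-th half-space `Hᵢ^≥`. -/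
def halfHS (Wp Wn : Fin m → Fin (n + 1) → TT) (i : Fin m) : Set (Fin (n + 1) → TT) :=
  {x | tdot (Wn i) x ≤ tdot (Wp i) x}

/-- The tropical edge `E_K = ⋂_{i ∈ K} Hᵢ ∩ C` (as a set). -/
def edgeEK (Wp Wn : Fin m → Fin (n + 1) → TT) (K : Finset (Fin m)) :
    Set (Fin (n + 1) → TT) :=
  {x | (∀ i ∈ K, x ∈ hypHS Wp Wn i) ∧ x ∈ coneC Wp Wn}

/-- Indicator vector `e^J` of `J ⊆ [n+1]`. -/
def eJ (J : Finset (Fin (n + 1))) : Fin (n + 1) → ℝ := fun j => if j ∈ J then 1 else 0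

/-- `e^J` (with `∅ ⊊ J ⊊ [n+1]`) is a feasible direction from `x` in `D`. -/
def Feasible (D : Set (Fin (n + 1) → TT)) (x : Fin (n + 1) → ℝ)
    (J : Finset (Fin (n + 1))) : Prop :=
  J ≠ ∅ ∧ J ≠ Finset.univ ∧
    ∃ μ : ℝ, 0 < μ ∧ ∀ lam : ℝ, 0 ≤ lam → lam ≤ μ → toT (x + lam • eJ J) ∈ D

/-- `{ξ + λ e^J : 0 ≤ λ ≤ μ}` is an ordinary segment of the tropical edge
`E_K`: it is contained in `E_K` and is maximal in the direction `e^J`. -/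
def IsOrdSeg (Wp Wn : Fin m → Fin (n + 1) → TT) (K : Finset (Fin m))
    (ξ : Fin (n + 1) → ℝ) (J : Finset (Fin (n + 1))) (μ : ℝ) : Prop :=
  0 < μ ∧ J ≠ ∅ ∧ J ≠ Finset.univ ∧
  (∀ lam : ℝ, 0 ≤ lam → lam ≤ μ → toT (ξ + lam • eJ J) ∈ edgeEK Wp Wn K) ∧
  (∀ ε : ℝ, 0 < ε → toT (ξ - ε • eJ J) ∉ edgeEK Wp Wn K) ∧
  (∀ ε : ℝ, 0 < ε → toT (ξ + (μ + ε) • eJ J) ∉ edgeEK Wp Wn K)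

/-- `x` is a breakpoint of `E_K`: an intermediate endpoint shared by two
consecutive ordinary segments. -/
def IsBreakpoint (Wp Wn : Fin m → Fin (n + 1) → TT) (K : Finset (Fin m))
    (x : Fin (n + 1) → ℝ) : Prop :=
  ∃ ξ J μ, IsOrdSeg Wp Wn K ξ J μ ∧ x = ξ + μ • eJ J ∧
    ∃ J' μ', IsOrdSeg Wp Wn K x J' μ' ∧ J ⊂ J'

/-- `x` lies in the relative interior of an ordinary segment of `E_K`. -/
def InRelIntSeg (Wp Wn : Fin m → Fin (n + 1) → TT) (K : Finset (Fin m))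
    (x : Fin (n + 1) → ℝ) : Prop :=
  ∃ ξ J μ, IsOrdSeg Wp Wn K ξ J μ ∧ ∃ lam : ℝ, 0 < lam ∧ lam < μ ∧ x = ξ + lam • eJ J

/-- Embedding of `TT = ℝ ∪ {−∞}` into `EReal`. -/
def tE : TT → EReal := WithBot.recBotCoe ⊥ (fun r => (r : EReal))

/-- `λ⁺_i(ξ,J) = (Wᵢ⁺⊙ξ) − max_{j∈J}(W⁺_{ij} + ξ_j)`, with `−(−∞) = +∞`. -/
def lamP (Wp : Fin m → Fin (n + 1) → TT) (i : Fin m) (ξ : Fin (n + 1) → ℝ)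
    (J : Finset (Fin (n + 1))) : EReal :=
  tE (tdot (Wp i) (toT ξ)) - tE (J.sup fun j => Wp i j + (ξ j : TT))

/-- `λ⁻_i(ξ,J) = (Wᵢ⁺⊙ξ) − max_{j∈J}(W⁻_{ij} + ξ_j)`, with `−(−∞) = +∞`. -/
def lamM (Wp Wn : Fin m → Fin (n + 1) → TT) (i : Fin m) (ξ : Fin (n + 1) → ℝ)
    (J : Finset (Fin (n + 1))) : EReal :=
  tE (tdot (Wp i) (toT ξ)) - tE (J.sup fun j => Wn i j + (ξ j : TT))

/-- `argmax(Wᵢ⁺⊙ξ)`. -/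
def argmaxP (Wp : Fin m → Fin (n + 1) → TT) (i : Fin m) (ξ : Fin (n + 1) → ℝ) :
    Set (Fin (n + 1)) :=
  {j | Wp i j + (ξ j : TT) = tdot (Wp i) (toT ξ)}

/-- `argmax(Wᵢ⁻⊙ξ)`. -/
def argmaxM (Wn : Fin m → Fin (n + 1) → TT) (i : Fin m) (ξ : Fin (n + 1) → ℝ) :
    Set (Fin (n + 1)) :=
  {j | Wn i j + (ξ j : TT) = tdot (Wn i) (toT ξ)}

/-- `Λ(ξ,J)`: candidate entering constraints. -/
def entSet (Wp : Fin m → Fin (n + 1) → TT) (K : Finset (Fin m))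
    (ξ : Fin (n + 1) → ℝ) (J : Finset (Fin (n + 1))) : Set (Fin m) :=
  {i | i ∉ K ∧ ∀ j ∈ J, j ∉ argmaxP Wp i ξ}

/-- `B(ξ,J)`: candidate breakpoint constraints. -/
def brkSet (Wp Wn : Fin m → Fin (n + 1) → TT) (K : Finset (Fin m))
    (ξ : Fin (n + 1) → ℝ) (J : Finset (Fin (n + 1))) : Set (Fin m) :=
  {i | i ∈ K ∧ (∀ j ∈ J, j ∉ argmaxP Wp i ξ) ∧ ∀ j ∈ J, j ∉ argmaxM Wn i ξ}

/-- Coordinate nodes with an arc into hyperplane node `i`. -/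
def degIn (Wp Wn : Fin m → Fin (n + 1) → TT) (x : Fin (n + 1) → ℝ) (i : Fin m) :
    Set (Fin (n + 1)) :=
  {j | arcRel Wp Wn x (Sum.inr j) (Sum.inl i)}

/-- Coordinate nodes with an arc out of hyperplane node `i`. -/
def degOut (Wp Wn : Fin m → Fin (n + 1) → TT) (x : Fin (n + 1) → ℝ) (i : Fin m) :
    Set (Fin (n + 1)) :=
  {j | arcRel Wp Wn x (Sum.inl i) (Sum.inr j)}

/-- Hyperplane node `i` has degree `(1,1)` in the tangent digraph at `x`. -/
def deg11 (Wp Wn : Fin m → Fin (n + 1) → TT) (x : Fin (n + 1) → ℝ) (i : Fin m) : Prop :=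
  (∃! j, j ∈ degIn Wp Wn x i) ∧ (∃! j, j ∈ degOut Wp Wn x i)

/-- Hyperplane node `i` has degree `(2,1)`. -/
def deg21 (Wp Wn : Fin m → Fin (n + 1) → TT) (x : Fin (n + 1) → ℝ) (i : Fin m) : Prop :=
  (degIn Wp Wn x i).ncard = 2 ∧ (∃! j, j ∈ degOut Wp Wn x i)

/-- Hyperplane node `i` has degree `(1,2)`. -/
def deg12 (Wp Wn : Fin m → Fin (n + 1) → TT) (x : Fin (n + 1) → ℝ) (i : Fin m) : Prop :=
  (∃! j, j ∈ degIn Wp Wn x i) ∧ (degOut Wp Wn x i).ncard = 2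

/-- The support of the tangent graph at `x`: all coordinate nodes together
with the hyperplane nodes. -/
def suppV (Wp Wn : Fin m → Fin (n + 1) → TT) (x : Fin (n + 1) → ℝ) : Set (TGV m n) :=
  {v | match v with
       | Sum.inl i => isHypNode Wp Wn x i
       | Sum.inr _ => True}

/-- The underlying undirected edge relation of the tangent graph. -/
def tedgeRel (Wp Wn : Fin m → Fin (n + 1) → TT) (x : Fin (n + 1) → ℝ) :
    TGV m n → TGV m n → Prop := fun u v =>
  match u, v with
  | Sum.inl i, Sum.inr j => isTEdge Wp Wn x i j
  | _, _ => False

/-- The tangent graph with the hyperplane node `ℓ` (and its incident edges)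
deleted. -/
def delNode (Wp Wn : Fin m → Fin (n + 1) → TT) (x : Fin (n + 1) → ℝ) (ℓ : Fin m) :
    SimpleGraph (TGV m n) :=
  SimpleGraph.fromRel fun u v =>
    tedgeRel Wp Wn x u v ∧ u ≠ Sum.inl ℓ ∧ v ≠ Sum.inl ℓ

/-- The tangent graph with the edge between hyperplane node `k` and coordinate
node `j` deleted. -/
def delEdge (Wp Wn : Fin m → Fin (n + 1) → TT) (x : Fin (n + 1) → ℝ) (k : Fin m)
    (j : Fin (n + 1)) : SimpleGraph (TGV m n) :=
  SimpleGraph.fromRel fun u v =>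
    tedgeRel Wp Wn x u v ∧ ¬(u = Sum.inl k ∧ v = Sum.inr j)

/-- Coordinate nodes weakly connected to hyperplane node `k` after deleting the
edge between `k` and `j`. -/
def reachJ (Wp Wn : Fin m → Fin (n + 1) → TT) (x : Fin (n + 1) → ℝ) (k : Fin m)
    (j : Fin (n + 1)) : Finset (Fin (n + 1)) :=
  Finset.univ.filter fun l => (delEdge Wp Wn x k j).Reachable (Sum.inl k) (Sum.inr l)

end Pivot

/-- Case (C1) of the trichotomy: `x` is a tropical basic point of the edge. -/
def CaseBasic {m n : ℕ} (Wp Wn : Fin m → Fin (n + 1) → TT) (K : Finset (Fin m))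
    (x : Fin (n + 1) → ℝ) : Prop :=
  ∃ ℓ : Fin m, ℓ ∉ K ∧ toT x ∈ edgeEK Wp Wn (insert ℓ K) ∧
    (∀ i, isHypNode Wp Wn x i ↔ i ∈ insert ℓ K) ∧
    (tangentGraph Wp Wn x).IsAcyclic ∧
    (∀ u v, u ∈ suppV Wp Wn x → v ∈ suppV Wp Wn x →
      (tangentGraph Wp Wn x).Reachable u v) ∧
    (∀ i, isHypNode Wp Wn x i → deg11 Wp Wn x i) ∧
    ∃ j₀ : Fin (n + 1), argmaxP Wp ℓ x = {j₀} ∧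
      ∀ J' : Finset (Fin (n + 1)),
        Feasible (edgeEK Wp Wn K) x J' ↔
          J' = Finset.univ.filter fun j =>
            (delNode Wp Wn x ℓ).Reachable (Sum.inr j₀) (Sum.inr j)

/-- Case (C2) of the trichotomy: `x` lies in the relative interior of an
ordinary segment. -/
def CaseInterior {m n : ℕ} (Wp Wn : Fin m → Fin (n + 1) → TT) (K : Finset (Fin m))
    (x : Fin (n + 1) → ℝ) : Prop :=
  InRelIntSeg Wp Wn K x ∧
  (∀ i, isHypNode Wp Wn x i ↔ i ∈ K) ∧
  (tangentGraph Wp Wn x).IsAcyclic ∧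
  (∀ i, isHypNode Wp Wn x i → deg11 Wp Wn x i) ∧
  ∃ S : Set (TGV m n), S ⊆ suppV Wp Wn x ∧ S.Nonempty ∧
    (suppV Wp Wn x \ S).Nonempty ∧
    (∀ u v, u ∈ suppV Wp Wn x → v ∈ suppV Wp Wn x →
      ((tangentGraph Wp Wn x).Reachable u v ↔ (u ∈ S ↔ v ∈ S))) ∧
    ∀ J' : Finset (Fin (n + 1)),
      Feasible (edgeEK Wp Wn K) x J' ↔
        (J' = Finset.univ.filter (fun j => Sum.inr j ∈ S) ∨
         J' = (Finset.univ.filter fun j => Sum.inr j ∈ S)ᶜ)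

/-- Case (C3) of the trichotomy: `x` is a breakpoint. -/
def CaseBreak {m n : ℕ} (Wp Wn : Fin m → Fin (n + 1) → TT) (K : Finset (Fin m))
    (x : Fin (n + 1) → ℝ) : Prop :=
  IsBreakpoint Wp Wn K x ∧
  (∀ i, isHypNode Wp Wn x i ↔ i ∈ K) ∧
  (tangentGraph Wp Wn x).IsAcyclic ∧
  (∀ u v, u ∈ suppV Wp Wn x → v ∈ suppV Wp Wn x →
    (tangentGraph Wp Wn x).Reachable u v) ∧
  ∃ k, k ∈ K ∧ (deg21 Wp Wn x k ∨ deg12 Wp Wn x k) ∧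
    (∀ i, isHypNode Wp Wn x i → i ≠ k → deg11 Wp Wn x i) ∧
    ∃ j₁ j₂ : Fin (n + 1), j₁ ≠ j₂ ∧
      ((deg21 Wp Wn x k ∧ degIn Wp Wn x k = {j₁, j₂}) ∨
       (deg12 Wp Wn x k ∧ degOut Wp Wn x k = {j₁, j₂})) ∧
      ∀ J'' : Finset (Fin (n + 1)),
        Feasible (edgeEK Wp Wn K) x J'' ↔
          (J'' = reachJ Wp Wn x k j₁ ∨ J'' = reachJ Wp Wn x k j₂)

/-! Tropical genericity makes the tangent graph at `x` a forest: a cycle would produce two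
distinct permutations attaining the tropical permanent of some square submatrix. Every hyperplane
node has an incoming and an outgoing arc, hence degree at least two, and the hyperplane nodes
include the `n - 1` elements of `K`. Comparing the number of edges of a forest with its number of
vertices leaves only three possibilities: one more hyperplane node (a tree, all degrees `(1, 1)`),
no more and all degrees `(1, 1)` (two trees), or no more and a single node of degree three (a
tree). Since a direction is feasible exactly when the first-order balance of arcs holds at every
hyperplane node, a node of degree `(1, 1)` forces its two neighbours to move together, so feasible
directions are unions of components of the graph with the exceptional node removed. -/

open Finset Filter Topology

section Ray

variable {n : ℕ} {a b : Fin (n + 1) → TT} {x : Fin (n + 1) → ℝ} {J : Finset (Fin (n + 1))}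

/-- The contribution `max_{j ∈ J} (a j + x j)` of the coordinates in `J` to the tropical dot
product of `a` and `x`. -/
def tdotOn (a : Fin (n + 1) → TT) (x : Fin (n + 1) → ℝ) (J : Finset (Fin (n + 1))) : TT :=
  J.sup fun j => a j + (x j : TT)

lemma tdotOn_le_tdot (a : Fin (n + 1) → TT) (x : Fin (n + 1) → ℝ) (J : Finset (Fin (n + 1))) :
    tdotOn a x J ≤ tdot a (toT x) :=
  Finset.sup_mono (subset_univ J)

lemma tdotOn_eq_tdot_iff (hpos : ⊥ < tdot a (toT x)) :
    tdotOn a x J = tdot a (toT x) ↔ ∃ j ∈ J, a j + (x j : TT) = tdot a (toT x) := by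
  refine ⟨fun h => ?_, fun ⟨j, hj, h⟩ => (tdotOn_le_tdot a x J).antisymm ?_⟩
  · obtain rfl | hJ := J.eq_empty_or_nonempty
    · exact absurd h hpos.ne
    · obtain ⟨j, hj, hsup⟩ := J.exists_mem_eq_sup hJ fun j => a j + (x j : TT)
      exact ⟨j, hj, hsup.symm.trans h⟩
  · exact h.symm.trans_le (Finset.le_sup (f := fun j => a j + (x j : TT)) hj)

lemma tdot_restrict (a : Fin (n + 1) → TT) (x : Fin (n + 1) → ℝ) (J : Finset (Fin (n + 1))) :
    tdot a (fun j => if j ∈ J then (x j : TT) else ⊥) = tdotOn a x J := by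
  have hoff : Jᶜ.sup (fun j => a j + if j ∈ J then (x j : TT) else ⊥) = ⊥ :=
    (Finset.sup_eq_bot_iff _ _).2 fun j hj => by rw [if_neg (mem_compl.1 hj), WithBot.add_bot]
  rw [tdot, ← union_compl J, sup_union, hoff, sup_bot_eq]
  exact Finset.sup_congr rfl fun j hj => by rw [if_pos hj]

lemma tdot_add_smul_eJ (a : Fin (n + 1) → TT) (x : Fin (n + 1) → ℝ) (J : Finset (Fin (n + 1)))
    (t : ℝ) :
    tdot a (toT (x + t • eJ J)) = max (tdotOn a x J + (t : TT)) (tdotOn a x Jᶜ) := by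
  have hshift : tdotOn a x J + (t : TT) = J.sup fun j => a j + (x j : TT) + (t : TT) :=
    Finset.apply_sup_eq_sup_comp (fun s : TT => s + (t : TT))
      (fun s s' => (max_add_add_right s s' (t : TT)).symm) (WithBot.bot_add _)
  rw [hshift, tdot, ← union_compl J, sup_union]
  refine congrArg₂ max (Finset.sup_congr rfl fun j hj => ?_) (Finset.sup_congr rfl fun j hj => ?_)
  · simp [toT, eJ, hj, add_assoc]
  · simp [toT, eJ, mem_compl.1 hj]

lemma tdot_eq_max_tdotOn (a : Fin (n + 1) → TT) (x : Fin (n + 1) → ℝ)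
    (J : Finset (Fin (n + 1))) :
    tdot a (toT x) = max (tdotOn a x J) (tdotOn a x Jᶜ) := by
  simpa using tdot_add_smul_eJ a x J 0

lemma tdot_add_smul_eJ_compl (a : Fin (n + 1) → TT) (x : Fin (n + 1) → ℝ)
    (J : Finset (Fin (n + 1))) (t : ℝ) :
    tdot a (toT (x + t • eJ Jᶜ)) = tdot a (toT (x + (-t) • eJ J)) + (t : TT) := by
  rw [tdot_add_smul_eJ, tdot_add_smul_eJ, compl_compl, max_comm, ← max_add_add_right, add_assoc,
    ← WithBot.coe_add, neg_add_cancel, WithBot.coe_zero, add_zero]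

/-- The parameters `t` at which the point `x + t e^J` satisfies the tropical inequality
`a ⊙ y ≤ b ⊙ y`. -/
def rayLE (a b : Fin (n + 1) → TT) (x : Fin (n + 1) → ℝ) (J : Finset (Fin (n + 1))) : Set ℝ :=
  {t | tdot a (toT (x + t • eJ J)) ≤ tdot b (toT (x + t • eJ J))}

lemma mem_rayLE_iff {t : ℝ} :
    t ∈ rayLE a b x J ↔
      (tdotOn a x J ≤ tdotOn b x J ∨ tdotOn a x J + (t : TT) ≤ tdotOn b x Jᶜ) ∧
      (tdotOn a x Jᶜ ≤ tdotOn b x J + (t : TT) ∨ tdotOn a x Jᶜ ≤ tdotOn b x Jᶜ) := by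
  have hcancel : tdotOn a x J + (t : TT) ≤ tdotOn b x J + (t : TT) ↔
      tdotOn a x J ≤ tdotOn b x J := WithBot.add_le_add_iff_right WithBot.coe_ne_bot
  change tdot a _ ≤ tdot b _ ↔ _
  rw [tdot_add_smul_eJ, tdot_add_smul_eJ, max_le_iff, le_max_iff, le_max_iff, hcancel]

lemma neg_mem_rayLE_iff {t : ℝ} : -t ∈ rayLE a b x J ↔ t ∈ rayLE a b x Jᶜ := by
  change tdot a _ ≤ tdot b _ ↔ tdot a _ ≤ tdot b _
  rw [tdot_add_smul_eJ_compl, tdot_add_smul_eJ_compl,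
    WithBot.add_le_add_iff_right WithBot.coe_ne_bot]

lemma ordConnected_rayLE : (rayLE a b x J).OrdConnected := by
  refine ⟨fun s hs t ht u hu => ?_⟩
  rw [mem_rayLE_iff] at hs ht ⊢
  refine ⟨ht.1.imp_right fun h => ?_, hs.2.imp_left fun h => ?_⟩
  · exact (add_le_add_right (WithBot.coe_le_coe.2 hu.2) _).trans h
  · exact h.trans (add_le_add_right (WithBot.coe_le_coe.2 hu.1) _)

lemma isClosed_setOf_add_coe_le (p s : TT) : IsClosed {t : ℝ | p + (t : TT) ≤ s} := by
  induction p using WithBot.recBotCoe with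
  | bot => simp
  | coe p =>
    induction s using WithBot.recBotCoe with
    | bot => simp [← WithBot.coe_add]
    | coe s =>
      simp only [← WithBot.coe_add, WithBot.coe_le_coe]
      exact isClosed_le (by fun_prop) (by fun_prop)

lemma isClosed_setOf_le_add_coe (q r : TT) : IsClosed {t : ℝ | q ≤ r + (t : TT)} := by
  induction r using WithBot.recBotCoe with
  | bot => simpa only [WithBot.bot_add] using isClosed_const
  | coe r =>
    induction q using WithBot.recBotCoe with
    | bot => simp
    | coe q =>
      simp only [← WithBot.coe_add, WithBot.coe_le_coe]
      exact isClosed_le (by fun_prop) (by fun_prop)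

lemma isClosed_rayLE : IsClosed (rayLE a b x J) := by
  have hset : rayLE a b x J =
      ({_t : ℝ | tdotOn a x J ≤ tdotOn b x J} ∪
        {t : ℝ | tdotOn a x J + (t : TT) ≤ tdotOn b x Jᶜ}) ∩
      ({t : ℝ | tdotOn a x Jᶜ ≤ tdotOn b x J + (t : TT)} ∪
        {_t : ℝ | tdotOn a x Jᶜ ≤ tdotOn b x Jᶜ}) :=
    Set.ext fun t => mem_rayLE_iff
  rw [hset]
  exact (isClosed_const.union (isClosed_setOf_add_coe_le _ _)).inter
    ((isClosed_setOf_le_add_coe _ _).union isClosed_const)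

lemma tdotOn_le_of_not_bddAbove_rayLE (h : ¬BddAbove (rayLE a b x J)) :
    tdotOn a x J ≤ tdotOn b x J := by
  by_contra hlt
  refine h ?_
  have hle : ∀ t ∈ rayLE a b x J, tdotOn a x J + (t : TT) ≤ tdotOn b x Jᶜ := fun t ht =>
    (mem_rayLE_iff.1 ht).1.resolve_left hlt
  lift tdotOn a x J to ℝ using (bot_le.trans_lt (not_le.1 hlt)).ne' with p
  generalize tdotOn b x Jᶜ = s at hle
  induction s using WithBot.recBotCoe with
  | bot => exact ⟨0, fun t ht => by simpa [← WithBot.coe_add] using hle t ht⟩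
  | coe s => exact ⟨s - p, fun t ht => le_sub_iff_add_le'.2 (by exact_mod_cast hle t ht)⟩

lemma tdotOn_eq_tdot_of_mem_rayLE {t : ℝ} (ht : 0 < t) (hmem : t ∈ rayLE a b x J)
    (heq : tdot a (toT x) = tdot b (toT x)) (ha : tdotOn a x J = tdot a (toT x)) :
    tdotOn b x J = tdot b (toT x) := by
  refine (tdotOn_le_tdot b x J).antisymm ?_
  rw [← heq, ← ha]
  refine (mem_rayLE_iff.1 hmem).1.elim id fun h => ?_
  have hle : tdotOn a x J + (t : TT) ≤ tdotOn a x J :=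
    h.trans ((tdotOn_le_tdot b x Jᶜ).trans (heq.symm.trans ha.symm).le)
  generalize tdotOn a x J = p at hle
  induction p using WithBot.recBotCoe with
  | bot => exact bot_le
  | coe p => exact absurd (by exact_mod_cast hle : p + t ≤ p) (by linarith)

lemma rayLE_mem_nhdsGE (hle : tdot a (toT x) ≤ tdot b (toT x))
    (hJ : tdot a (toT x) = tdot b (toT x) → tdotOn a x J = tdot a (toT x) →
      tdotOn b x J = tdot b (toT x)) :
    rayLE a b x J ∈ 𝓝[≥] (0 : ℝ) := by
  have ha := tdot_eq_max_tdotOn a x J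
  have hb := tdot_eq_max_tdotOn b x J
  obtain hpr | hrp := le_or_gt (tdotOn a x J) (tdotOn b x J)
  · filter_upwards [self_mem_nhdsWithin] with t (ht : 0 ≤ t)
    have hq := (tdotOn_le_tdot a x Jᶜ).trans (hle.trans hb.le)
    exact mem_rayLE_iff.2 ⟨Or.inl hpr, (le_max_iff.1 hq).imp_left fun h =>
      h.trans (le_add_of_nonneg_right (WithBot.coe_nonneg.2 ht))⟩
  have hps : tdotOn a x J ≤ tdotOn b x Jᶜ :=
    (le_max_iff.1 (((tdotOn_le_tdot a x J).trans hle).trans hb.le)).resolve_left hrp.not_ge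
  have hs : tdot b (toT x) = tdotOn b x Jᶜ := hb.trans (max_eq_right (hrp.le.trans hps))
  have hqs : tdotOn a x Jᶜ ≤ tdotOn b x Jᶜ := (tdotOn_le_tdot a x Jᶜ).trans (hle.trans hs.le)
  have hlt : tdotOn a x J < tdotOn b x Jᶜ := by
    refine hps.lt_of_ne fun h => hrp.ne ?_
    have hav : tdotOn a x J = tdot a (toT x) := by rw [ha, max_eq_left (hqs.trans h.ge)]
    exact (hJ (hav.symm.trans (h.trans hs.symm)) hav).trans (hs.trans h.symm)
  have hsmall : ∀ᶠ t : ℝ in 𝓝 0, tdotOn a x J + (t : TT) ≤ tdotOn b x Jᶜ := by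
    lift tdotOn a x J to ℝ using (bot_le.trans_lt hrp).ne' with p
    lift tdotOn b x Jᶜ to ℝ using (bot_le.trans_lt hlt).ne' with s
    filter_upwards [eventually_le_nhds (sub_pos.2 (WithBot.coe_lt_coe.1 hlt))] with t ht
    exact_mod_cast le_sub_iff_add_le'.1 ht
  filter_upwards [nhdsWithin_le_nhds hsmall] with t ht
  exact mem_rayLE_iff.2 ⟨Or.inr ht, Or.inr hqs⟩

lemma rayLE_mem_nhdsGE_iff (hle : tdot a (toT x) ≤ tdot b (toT x)) :
    rayLE a b x J ∈ 𝓝[≥] (0 : ℝ) ↔ (tdot a (toT x) = tdot b (toT x) →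
      tdotOn a x J = tdot a (toT x) → tdotOn b x J = tdot b (toT x)) := by
  refine ⟨fun h => ?_, rayLE_mem_nhdsGE hle⟩
  obtain ⟨t, hmem, ht⟩ := nonempty_of_mem
    (inter_mem (nhdsWithin_mono (0 : ℝ) Set.Ioi_subset_Ici_self h) self_mem_nhdsWithin)
  exact tdotOn_eq_tdot_of_mem_rayLE ht hmem

end Ray

section Edge

variable {m n : ℕ} {Wp Wn : Fin m → Fin (n + 1) → TT} {K : Finset (Fin m)}
  {x : Fin (n + 1) → ℝ} {J J' : Finset (Fin (n + 1))} {i : Fin m} {j : Fin (n + 1)}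

/-- `(Wp, Wn)` is a signed tropical matrix: in each entry, at most one of the two parts is
finite. -/
def IsSigned (Wp Wn : Fin m → Fin (n + 1) → TT) : Prop :=
  ∀ i j, min (Wp i j) (Wn i j) = ⊥

/-- Every row of the signed tropical matrix `(Wp, Wn)` has a finite entry. -/
def HasNonzeroRows (Wp Wn : Fin m → Fin (n + 1) → TT) : Prop :=
  ∀ i, ∃ j, max (Wp i j) (Wn i j) ≠ ⊥

/-- Every nonzero point of the tropical cone has only finite coordinates. -/
def HasFiniteCone (Wp Wn : Fin m → Fin (n + 1) → TT) : Prop :=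
  ∀ x ∈ coneC Wp Wn, x ≠ (fun _ => (⊥ : TT)) → ∀ j, x j ≠ ⊥

lemma tdot_tmod (Wp Wn : Fin m → Fin (n + 1) → TT) (i : Fin m) (y : Fin (n + 1) → TT) :
    tdot (tmod Wp Wn i) y = max (tdot (Wp i) y) (tdot (Wn i) y) := by
  rw [tdot, tdot, tdot, ← Finset.sup_sup]
  exact Finset.sup_congr rfl fun j _ => (max_add_add_right _ _ _).symm

lemma isHypNode_iff (hrow : HasNonzeroRows Wp Wn) :
    isHypNode Wp Wn x i ↔ tdot (Wp i) (toT x) = tdot (Wn i) (toT x) := by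
  refine ⟨And.left, fun h => ⟨h, ?_⟩⟩
  obtain ⟨j, hj⟩ := hrow i
  calc ⊥ < tmod Wp Wn i j + (x j : TT) :=
        bot_lt_iff_ne_bot.2 fun hbot => (WithBot.add_eq_bot.1 hbot).elim hj WithBot.coe_ne_bot
    _ ≤ tdot (tmod Wp Wn i) (toT x) :=
        Finset.le_sup (f := fun j => tmod Wp Wn i j + toT x j) (mem_univ j)
    _ = tdot (Wp i) (toT x) := by rw [tdot_tmod, ← h, max_self]

lemma degIn_eq_argmaxP (hsign : IsSigned Wp Wn) (hi : isHypNode Wp Wn x i) :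
    degIn Wp Wn x i = argmaxP Wp i x := by
  ext j
  have hmod : Wp i j ≠ ⊥ → tmod Wp Wn i j = Wp i j := fun hne =>
    max_eq_left (((min_eq_bot.1 (hsign i j)).resolve_left hne).trans_le bot_le)
  have htdot : tdot (tmod Wp Wn i) (toT x) = tdot (Wp i) (toT x) := by
    rw [tdot_tmod, ← hi.1, max_self]
  refine ⟨fun ⟨⟨_, hj⟩, hne⟩ => by rwa [hmod hne, htdot] at hj, fun hj => ?_⟩
  have hne : Wp i j ≠ ⊥ := (WithBot.add_ne_bot.1 (hj.trans_ne hi.2.ne')).1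
  exact ⟨⟨hi, by rwa [hmod hne, htdot]⟩, hne⟩

lemma degOut_eq_argmaxM (hsign : IsSigned Wp Wn) (hi : isHypNode Wp Wn x i) :
    degOut Wp Wn x i = argmaxM Wn i x := by
  ext j
  have hmod : Wn i j ≠ ⊥ → tmod Wp Wn i j = Wn i j := fun hne =>
    max_eq_right (((min_eq_bot.1 (hsign i j)).resolve_right hne).trans_le bot_le)
  have htdot : tdot (tmod Wp Wn i) (toT x) = tdot (Wn i) (toT x) := by
    rw [tdot_tmod, hi.1, max_self]
  refine ⟨fun ⟨⟨_, hj⟩, hne⟩ => by rwa [hmod hne, htdot] at hj, fun hj => ?_⟩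
  have hne : Wn i j ≠ ⊥ := (WithBot.add_ne_bot.1 (hj.trans_ne (hi.1 ▸ hi.2).ne')).1
  exact ⟨⟨hi, by rwa [hmod hne, htdot]⟩, hne⟩

lemma tdotOn_pos_eq_tdot_iff (hsign : IsSigned Wp Wn) (hi : isHypNode Wp Wn x i) :
    tdotOn (Wp i) x J = tdot (Wp i) (toT x) ↔ ∃ j ∈ J, j ∈ degIn Wp Wn x i := by
  rw [degIn_eq_argmaxP hsign hi]
  exact tdotOn_eq_tdot_iff hi.2

lemma tdotOn_neg_eq_tdot_iff (hsign : IsSigned Wp Wn) (hi : isHypNode Wp Wn x i) :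
    tdotOn (Wn i) x J = tdot (Wn i) (toT x) ↔ ∃ j ∈ J, j ∈ degOut Wp Wn x i := by
  rw [degOut_eq_argmaxM hsign hi]
  exact tdotOn_eq_tdot_iff (hi.1 ▸ hi.2)

lemma mem_edgeEK_iff {y : Fin (n + 1) → TT} :
    y ∈ edgeEK Wp Wn K ↔
      (∀ i, tdot (Wn i) y ≤ tdot (Wp i) y) ∧ ∀ i ∈ K, tdot (Wp i) y ≤ tdot (Wn i) y :=
  ⟨fun h => ⟨h.2, fun i hi => (h.1 i hi).le⟩,
    fun h => ⟨fun i hi => (h.2 i hi).antisymm (h.1 i), h.1⟩⟩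

/-- The parameters `t` at which the point `x + t e^J` lies on the tropical edge `E_K`. -/
def edgeRay (Wp Wn : Fin m → Fin (n + 1) → TT) (K : Finset (Fin m)) (x : Fin (n + 1) → ℝ)
    (J : Finset (Fin (n + 1))) : Set ℝ :=
  {t | toT (x + t • eJ J) ∈ edgeEK Wp Wn K}

lemma edgeRay_eq_inter :
    edgeRay Wp Wn K x J =
      (⋂ i, rayLE (Wn i) (Wp i) x J) ∩ ⋂ i ∈ K, rayLE (Wp i) (Wn i) x J := by
  ext t
  simp only [Set.mem_inter_iff, Set.mem_iInter]
  exact mem_edgeEK_iff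

lemma zero_mem_edgeRay (hx : toT x ∈ edgeEK Wp Wn K) : 0 ∈ edgeRay Wp Wn K x J := by
  simpa [edgeRay] using hx

lemma neg_mem_edgeRay_iff {t : ℝ} : -t ∈ edgeRay Wp Wn K x J ↔ t ∈ edgeRay Wp Wn K x Jᶜ := by
  simp only [edgeRay_eq_inter, Set.mem_inter_iff, Set.mem_iInter, neg_mem_rayLE_iff]

lemma isClosed_edgeRay : IsClosed (edgeRay Wp Wn K x J) := by
  rw [edgeRay_eq_inter]
  exact (isClosed_iInter fun _ => isClosed_rayLE).inter
    (isClosed_biInter fun _ _ => isClosed_rayLE)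

lemma ordConnected_edgeRay : (edgeRay Wp Wn K x J).OrdConnected := by
  rw [edgeRay_eq_inter]
  exact (Set.ordConnected_iInter fun _ => ordConnected_rayLE).inter
    (Set.ordConnected_iInter fun _ => Set.ordConnected_iInter fun _ => ordConnected_rayLE)

lemma bddAbove_edgeRay (hfin : HasFiniteCone Wp Wn) (hne : J ≠ ∅) (huniv : J ≠ univ) :
    BddAbove (edgeRay Wp Wn K x J) := by
  by_contra hunb
  obtain ⟨j, hj⟩ := nonempty_iff_ne_empty.2 hne
  obtain ⟨j', hj'⟩ : ∃ j', j' ∉ J := by simpa [eq_univ_iff_forall] using huniv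
  have hcone : (fun j => if j ∈ J then (x j : TT) else ⊥) ∈ coneC Wp Wn := fun i => by
    rw [tdot_restrict, tdot_restrict]
    refine tdotOn_le_of_not_bddAbove_rayLE fun hb => hunb (hb.mono ?_)
    rw [edgeRay_eq_inter]
    exact Set.inter_subset_left.trans (Set.iInter_subset _ i)
  exact hfin _ hcone (fun h => by simpa [hj] using congrFun h j) j' (if_neg hj')

lemma exists_edgeRay_eq_Icc (hfin : HasFiniteCone Wp Wn) (hx : toT x ∈ edgeEK Wp Wn K)
    (hne : J ≠ ∅) (huniv : J ≠ univ) :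
    ∃ L U : ℝ, L ≤ 0 ∧ 0 ≤ U ∧ edgeRay Wp Wn K x J = Set.Icc L U := by
  have hbelow : BddBelow (edgeRay Wp Wn K x J) := by
    obtain ⟨B, hB⟩ := bddAbove_edgeRay (K := K) (x := x) hfin
      (mt (compl_eq_empty_iff J).1 huniv) (mt (compl_eq_univ_iff J).1 hne)
    exact ⟨-B, fun t ht => neg_le.1 (hB (neg_mem_edgeRay_iff.1 (by rwa [neg_neg])))⟩
  have h0 : (0 : ℝ) ∈ edgeRay Wp Wn K x J := zero_mem_edgeRay hx
  have hIcc := eq_Icc_of_connected_compact ⟨⟨0, h0⟩, ordConnected_edgeRay.isPreconnected⟩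
    (Metric.isCompact_of_isClosed_isBounded isClosed_edgeRay
      (isBounded_iff_bddBelow_bddAbove.2 ⟨hbelow, bddAbove_edgeRay hfin hne huniv⟩))
  rw [hIcc] at h0
  exact ⟨_, _, h0.1, h0.2, hIcc⟩

lemma feasible_iff_mem_nhdsGE {D : Set (Fin (n + 1) → TT)} :
    Feasible D x J ↔
      J ≠ ∅ ∧ J ≠ univ ∧ {t : ℝ | toT (x + t • eJ J) ∈ D} ∈ 𝓝[≥] (0 : ℝ) := by
  simp only [Feasible, mem_nhdsGE_iff_exists_Icc_subset, Set.subset_def, Set.mem_Icc,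
    and_imp, Set.mem_ofPred_eq]

lemma feasible_edgeEK_iff_of_edgeRay_eq {L U : ℝ} (hL : L ≤ 0)
    (hIcc : edgeRay Wp Wn K x J = Set.Icc L U) :
    Feasible (edgeEK Wp Wn K) x J ↔ J ≠ ∅ ∧ J ≠ univ ∧ 0 < U := by
  rw [feasible_iff_mem_nhdsGE]
  change _ ∧ _ ∧ edgeRay Wp Wn K x J ∈ _ ↔ _
  rw [hIcc]
  refine and_congr_right fun _ => and_congr_right fun _ => ⟨fun h => ?_, fun h => ?_⟩
  · obtain ⟨t, ht, hpos⟩ := nonempty_of_mem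
      (inter_mem (nhdsWithin_mono (0 : ℝ) Set.Ioi_subset_Ici_self h) self_mem_nhdsWithin)
    exact lt_of_lt_of_le hpos ht.2
  · exact mem_of_superset (Icc_mem_nhdsGE h) (Set.Icc_subset_Icc_left hL)

lemma edgeRay_compl_eq_Icc {L U : ℝ} (hIcc : edgeRay Wp Wn K x J = Set.Icc L U) :
    edgeRay Wp Wn K x Jᶜ = Set.Icc (-U) (-L) := by
  ext t
  rw [← neg_mem_edgeRay_iff, hIcc, Set.mem_Icc, Set.mem_Icc, neg_le, le_neg, and_comm]

lemma isOrdSeg_of_edgeRay_eq {L U : ℝ} (hne : J ≠ ∅) (huniv : J ≠ univ) (hlt : L < U)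
    (hIcc : edgeRay Wp Wn K x J = Set.Icc L U) :
    IsOrdSeg Wp Wn K (x + L • eJ J) J (U - L) := by
  have hmem : ∀ t, toT (x + L • eJ J + t • eJ J) ∈ edgeEK Wp Wn K ↔ L + t ∈ Set.Icc L U := by
    intro t
    rw [← hIcc, add_assoc, ← add_smul]
    rfl
  refine ⟨sub_pos.2 hlt, hne, huniv, fun t h0 h1 => (hmem t).2 ⟨by linarith, by linarith⟩,
    fun ε hε h => ?_, fun ε hε h => ?_⟩
  · rw [sub_eq_add_neg, ← neg_smul] at h
    linarith [((hmem (-ε)).1 h).1]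
  · linarith [((hmem _).1 h).2]

lemma inRelIntSeg_of_feasible (hfin : HasFiniteCone Wp Wn) (hx : toT x ∈ edgeEK Wp Wn K)
    (hJ : Feasible (edgeEK Wp Wn K) x J) (hJc : Feasible (edgeEK Wp Wn K) x Jᶜ) :
    InRelIntSeg Wp Wn K x := by
  obtain ⟨L, U, hL, hU, hIcc⟩ := exists_edgeRay_eq_Icc hfin hx hJ.1 hJ.2.1
  have hUpos : 0 < U := ((feasible_edgeEK_iff_of_edgeRay_eq hL hIcc).1 hJ).2.2
  have hLneg : 0 < -L := ((feasible_edgeEK_iff_of_edgeRay_eq (neg_nonpos.2 hU)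
    (edgeRay_compl_eq_Icc hIcc)).1 hJc).2.2
  refine ⟨x + L • eJ J, J, U - L, isOrdSeg_of_edgeRay_eq hJ.1 hJ.2.1 (by linarith) hIcc,
    -L, hLneg, by linarith, ?_⟩
  rw [add_assoc, ← add_smul, add_neg_cancel, zero_smul, add_zero]

lemma exists_edgeRay_eq_Icc_zero (hfin : HasFiniteCone Wp Wn) (hx : toT x ∈ edgeEK Wp Wn K)
    (hJ : Feasible (edgeEK Wp Wn K) x J) (hJc : ¬Feasible (edgeEK Wp Wn K) x Jᶜ) :
    ∃ U, 0 < U ∧ edgeRay Wp Wn K x J = Set.Icc 0 U := by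
  obtain ⟨L, U, hL, hU, hIcc⟩ := exists_edgeRay_eq_Icc hfin hx hJ.1 hJ.2.1
  have hL0 : L = 0 := by
    by_contra hne
    exact hJc ((feasible_edgeEK_iff_of_edgeRay_eq (neg_nonpos.2 hU) (edgeRay_compl_eq_Icc hIcc)).2
      ⟨mt (compl_eq_empty_iff J).1 hJ.2.1, mt (compl_eq_univ_iff J).1 hJ.1,
        neg_pos.2 (hL.lt_of_ne hne)⟩)
  exact ⟨U, ((feasible_edgeEK_iff_of_edgeRay_eq hL hIcc).1 hJ).2.2, hL0 ▸ hIcc⟩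

lemma isBreakpoint_of_feasible (hfin : HasFiniteCone Wp Wn) (hx : toT x ∈ edgeEK Wp Wn K)
    (hJ : Feasible (edgeEK Wp Wn K) x J) (hJc : ¬Feasible (edgeEK Wp Wn K) x Jᶜ)
    (hJ' : Feasible (edgeEK Wp Wn K) x J') (hJc' : ¬Feasible (edgeEK Wp Wn K) x J'ᶜ)
    (hss : Jᶜ ⊂ J') :
    IsBreakpoint Wp Wn K x := by
  obtain ⟨U, hU, hIcc⟩ := exists_edgeRay_eq_Icc_zero hfin hx hJ hJc
  obtain ⟨U', hU', hIcc'⟩ := exists_edgeRay_eq_Icc_zero hfin hx hJ' hJc'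
  have hseg := isOrdSeg_of_edgeRay_eq (mt (compl_eq_empty_iff J).1 hJ.2.1)
    (mt (compl_eq_univ_iff J).1 hJ.1) (by linarith) (edgeRay_compl_eq_Icc hIcc)
  have hseg' := isOrdSeg_of_edgeRay_eq hJ'.1 hJ'.2.1 hU' hIcc'
  rw [zero_smul, add_zero] at hseg'
  refine ⟨_, _, _, hseg, ?_, J', _, hseg', hss⟩
  rw [add_assoc, ← add_smul, add_sub_cancel, neg_zero, zero_smul, add_zero]

lemma feasible_edgeEK_iff (hsign : IsSigned Wp Wn) (hrow : HasNonzeroRows Wp Wn)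
    (hx : toT x ∈ edgeEK Wp Wn K) :
    Feasible (edgeEK Wp Wn K) x J ↔ J ≠ ∅ ∧ J ≠ univ ∧
      (∀ i, (∃ j ∈ J, j ∈ degOut Wp Wn x i) → ∃ j ∈ J, j ∈ degIn Wp Wn x i) ∧
      ∀ i ∈ K, (∃ j ∈ J, j ∈ degIn Wp Wn x i) → ∃ j ∈ J, j ∈ degOut Wp Wn x i := by
  have hnode : ∀ {i}, tdot (Wp i) (toT x) = tdot (Wn i) (toT x) ↔ isHypNode Wp Wn x i :=
    (isHypNode_iff hrow).symm
  have hx' := mem_edgeEK_iff.1 hx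
  rw [feasible_iff_mem_nhdsGE]
  change _ ∧ _ ∧ edgeRay Wp Wn K x J ∈ _ ↔ _
  rw [edgeRay_eq_inter, inter_mem_iff, iInter_mem, biInter_finset_mem]
  refine and_congr_right fun _ => and_congr_right fun _ => and_congr (forall_congr' fun i => ?_)
    (forall₂_congr fun i hi => ?_)
  · rw [rayLE_mem_nhdsGE_iff (hx'.1 i), eq_comm, hnode]
    by_cases h : isHypNode Wp Wn x i
    · rw [tdotOn_pos_eq_tdot_iff hsign h, tdotOn_neg_eq_tdot_iff hsign h]
      exact forall_prop_of_true h
    · exact iff_of_true (fun h' => absurd h' h) fun ⟨_, _, hj⟩ => absurd hj.1.1 h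
  · have h := hnode.1 (hx.1 i hi)
    rw [rayLE_mem_nhdsGE_iff (hx'.2 i hi), hnode, tdotOn_pos_eq_tdot_iff hsign h,
      tdotOn_neg_eq_tdot_iff hsign h]
    exact forall_prop_of_true h

end Edge

section BipartiteCycle

variable {α β : Type*} {G : SimpleGraph (α ⊕ β)}

lemma isLeft_eq_not_isLeft_of_adj (hG : G ≤ completeBipartiteGraph α β) {u v : α ⊕ β}
    (h : G.Adj u v) : v.isLeft = !u.isLeft := by
  have hadj := hG h
  cases u <;> cases v <;> simp_all

lemma isLeft_getVert_iff (hG : G ≤ completeBipartiteGraph α β) {i : α} {v : α ⊕ β}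
    (w : G.Walk (Sum.inl i) v) {t : ℕ} (ht : t ≤ w.length) :
    (w.getVert t).isLeft ↔ Even t := by
  induction t with
  | zero => simp
  | succ t ih =>
    rw [isLeft_eq_not_isLeft_of_adj hG (w.adj_getVert_succ ht), Nat.even_add_one,
      ← ih (Nat.le_of_succ_le ht), Bool.not_eq_true', Bool.not_eq_true]

lemma exists_isCycle_inl (hG : G ≤ completeBipartiteGraph α β) {v : α ⊕ β} {w : G.Walk v v}
    (hw : w.IsCycle) : ∃ (i : α) (w' : G.Walk (Sum.inl i) (Sum.inl i)), w'.IsCycle := by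
  rcases v with i | j
  · exact ⟨i, w, hw⟩
  · obtain ⟨i, hi⟩ : ∃ i, w.snd = Sum.inl i := Sum.isLeft_iff.1 <| by
      rw [isLeft_eq_not_isLeft_of_adj hG (w.adj_snd hw.not_nil), Sum.isLeft_inr, Bool.not_false]
    have hmem : Sum.inl i ∈ w.support := hi ▸ w.getVert_mem_support 1
    exact ⟨i, w.rotate _ hmem, hw.rotate hmem⟩

lemma exists_alternating_of_isCycle (hG : G ≤ completeBipartiteGraph α β) {v : α ⊕ β}
    {w : G.Walk v v} (hw : w.IsCycle) :
    ∃ (k : ℕ) (r : Fin (k + 2) → α) (c : Fin (k + 2) → β), r.Injective ∧ c.Injective ∧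
      (∀ t, G.Adj (Sum.inl (r t)) (Sum.inr (c t))) ∧
      ∀ t, G.Adj (Sum.inl (r (t + 1))) (Sum.inr (c t)) := by
  obtain ⟨i, w, hw⟩ := exists_isCycle_inl hG hw
  obtain ⟨k, hk⟩ : ∃ k, w.length = 2 * (k + 2) := by
    have heven : Even w.length :=
      (isLeft_getVert_iff hG w le_rfl).1 (by rw [w.getVert_length, Sum.isLeft_inl])
    have hthree := hw.three_le_length
    exact ⟨w.length / 2 - 2, by grind⟩
  have hrow : ∀ t : Fin (k + 2), ∃ i, w.getVert (2 * t) = Sum.inl i := fun t =>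
    Sum.isLeft_iff.1 ((isLeft_getVert_iff hG w (by omega)).2 (even_two_mul _))
  have hcol : ∀ t : Fin (k + 2), ∃ j, w.getVert (2 * t + 1) = Sum.inr j := fun t =>
    Sum.isRight_iff.1 <| Sum.not_isLeft.1 fun h => Nat.not_even_two_mul_add_one t
      ((isLeft_getVert_iff hG w (by omega)).1 h)
  choose r hr using hrow
  choose c hc using hcol
  have hnext : ∀ t : Fin (k + 2), w.getVert (2 * t + 1 + 1) = Sum.inl (r (t + 1)) := fun t => by
    rw [← hr, Fin.val_add_one]
    split_ifs with ht
    · rw [ht, show 2 * (Fin.last (k + 1)).val + 1 + 1 = w.length by rw [hk, Fin.val_last]; ring,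
        w.getVert_length, mul_zero, w.getVert_zero]
    · rfl
  refine ⟨k, r, c, fun s t h => Fin.ext ?_, fun s t h => Fin.ext ?_, fun t => ?_, fun t => ?_⟩
  · have := hw.getVert_injOn' (show 2 * s.val ≤ w.length - 1 by omega)
      (show 2 * t.val ≤ w.length - 1 by omega) (by rw [hr, hr, h])
    omega
  · have := hw.getVert_injOn' (show 2 * s.val + 1 ≤ w.length - 1 by omega)
      (show 2 * t.val + 1 ≤ w.length - 1 by omega) (by rw [hc, hc, h])
    omega
  · rw [← hr, ← hc]
    exact w.adj_getVert_succ (by omega)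
  · rw [← hnext, ← hc]
    exact (w.adj_getVert_succ (by omega)).symm

end BipartiteCycle

section TangentGraph

variable {m n : ℕ} {Wp Wn : Fin m → Fin (n + 1) → TT} {x : Fin (n + 1) → ℝ}

lemma sum_eq_tper_of_potential {q : ℕ} {M : Fin q → Fin q → TT} {y : Fin q → ℝ} {d : Fin q → TT}
    (hle : ∀ i j, M i j + (y j : TT) ≤ d i) {σ : Equiv.Perm (Fin q)}
    (hσ : ∀ i, M i (σ i) + (y (σ i) : TT) = d i) :
    ∑ i, M i (σ i) = tper M := by
  have hreindex : ∀ τ : Equiv.Perm (Fin q),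
      ∑ i, M i (τ i) + ((∑ j, y j : ℝ) : TT) = ∑ i, (M i (τ i) + (y (τ i) : TT)) := fun τ => by
    rw [sum_add_distrib, WithBot.coe_sum, Equiv.sum_comp τ fun j => (y j : TT)]
  refine (Finset.le_sup (f := fun τ : Equiv.Perm (Fin q) => ∑ i, M i (τ i))
    (mem_univ σ)).antisymm (Finset.sup_le fun τ _ => ?_)
  refine WithBot.le_of_add_le_add_right (z := ((∑ j, y j : ℝ) : TT)) WithBot.coe_ne_bot ?_
  rw [hreindex, hreindex]
  exact sum_le_sum fun i _ => (hle i (τ i)).trans (hσ i).ge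

lemma tangentGraph_le_completeBipartiteGraph :
    tangentGraph Wp Wn x ≤ completeBipartiteGraph (Fin m) (Fin (n + 1)) := by
  rintro (i | j) (i' | j') <;> simp [tangentGraph]

lemma tangentGraph_adj {i : Fin m} {j : Fin (n + 1)} :
    (tangentGraph Wp Wn x).Adj (Sum.inl i) (Sum.inr j) ↔ isTEdge Wp Wn x i j := by
  simp [tangentGraph]

lemma tmod_ne_bot_of_isTEdge {i : Fin m} {j : Fin (n + 1)} (h : isTEdge Wp Wn x i j) :
    tmod Wp Wn i j ≠ ⊥ := by
  have hpos : ⊥ < tmod Wp Wn i j + (x j : TT) :=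
    h.1.2.trans_le ((le_max_left _ _).trans (h.2.trans (tdot_tmod _ _ _ _)).ge)
  exact (WithBot.add_ne_bot.1 hpos.ne').1

lemma tropSingular_of_potential {q : ℕ} {M : Fin q → Fin q → TT} {y : Fin q → ℝ} {d : Fin q → TT}
    (hle : ∀ i j, M i j + (y j : TT) ≤ d i) {σ τ : Equiv.Perm (Fin q)} (hne : σ ≠ τ)
    (hσ : ∀ i, M i (σ i) + (y (σ i) : TT) = d i) (hτ : ∀ i, M i (τ i) + (y (τ i) : TT) = d i) :
    TropSingular M :=
  Or.inr ⟨σ, τ, hne, sum_eq_tper_of_potential hle hσ, sum_eq_tper_of_potential hle hτ⟩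

lemma isAcyclic_tangentGraph (hgen : TropGeneric (tmod Wp Wn)) :
    (tangentGraph Wp Wn x).IsAcyclic := by
  intro v w hw
  obtain ⟨k, r, c, hr, hc, hadj, hadj'⟩ :=
    exists_alternating_of_isCycle tangentGraph_le_completeBipartiteGraph hw
  simp only [tangentGraph_adj] at hadj hadj'
  set M : Fin (k + 2) → Fin (k + 2) → TT := fun s t => tmod Wp Wn (r s) (c t)
  have hle : ∀ s t, M s t + (x (c t) : TT) ≤ tdot (tmod Wp Wn (r s)) (toT x) := fun s t =>
    Finset.le_sup (f := fun j => tmod Wp Wn (r s) j + toT x j) (mem_univ (c t))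
  have hid : ∀ s, M s (Equiv.refl _ s) + (x (c (Equiv.refl _ s)) : TT) =
      tdot (tmod Wp Wn (r s)) (toT x) := fun s => (hadj s).2
  have hrot : ∀ s, M s ((finRotate (k + 2)).symm s) + (x (c ((finRotate (k + 2)).symm s)) : TT) =
      tdot (tmod Wp Wn (r s)) (toT x) := fun s => by
    obtain ⟨t, rfl⟩ := (finRotate (k + 2)).surjective s
    rw [Equiv.symm_apply_apply, finRotate_apply]
    exact (hadj' t).2
  have hne : Equiv.refl (Fin (k + 2)) ≠ (finRotate (k + 2)).symm := fun h => by
    simpa [Equiv.eq_symm_apply] using DFunLike.congr_fun h 0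
  refine (hgen (k + 2) r c hr hc).elim (fun hbot => ?_) fun h =>
    h (tropSingular_of_potential hle hne hid hrot)
  obtain ⟨s, -, hs⟩ := WithBot.sum_eq_bot_iff.1 ((sum_eq_tper_of_potential hle hid).trans hbot)
  exact tmod_ne_bot_of_isTEdge (hadj s) hs

end TangentGraph

section ForestCount

open SimpleGraph

variable {V : Type*} {G : SimpleGraph V} {S : Set V} {u v w : V}

lemma ncard_edgeSet_induce (hS : G.support ⊆ S) :
    (G.induce S).edgeSet.ncard = G.edgeSet.ncard := by
  rw [← Set.ncard_image_of_injective _ (Sym2.map.injective Subtype.val_injective)]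
  congr 1
  ext e
  induction e with | _ a b
  constructor
  · rintro ⟨e, he, heq⟩
    induction e with | _ c d
    rw [← heq]
    exact he
  · intro hab
    exact ⟨s(⟨a, hS ⟨b, hab⟩⟩, ⟨b, hS ⟨a, hab.symm⟩⟩), hab, rfl⟩

lemma reachable_induce_of_reachable (hS : G.support ⊆ S) (hu : u ∈ S) (hv : v ∈ S)
    (h : G.Reachable u v) : (G.induce S).Reachable ⟨u, hu⟩ ⟨v, hv⟩ := by
  obtain ⟨p⟩ := h
  induction p with
  | nil => rfl
  | cons hadj _ ih =>
    have hind : (G.induce S).Adj ⟨_, hu⟩ ⟨_, hS ⟨_, hadj.symm⟩⟩ := hadj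
    exact hind.reachable.trans (ih _ hv)

lemma ncard_edgeSet_add_one_le [Finite V] (hG : G.IsAcyclic) (hS : G.support ⊆ S)
    (hne : S.Nonempty) : G.edgeSet.ncard + 1 ≤ S.ncard := by
  have := hne.to_subtype
  obtain ⟨T, hle, -, hT⟩ :=
    connected_top.exists_isTree_le_of_le_of_isAcyclic le_top (hG.induce S)
  have hcard := (isTree_iff_connected_and_card.1 hT).2
  rw [Nat.card_coe_set_eq, Nat.card_coe_set_eq] at hcard
  rw [← hcard, ← ncard_edgeSet_induce hS, add_le_add_iff_right]
  exact Set.ncard_le_ncard (edgeSet_mono hle)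

lemma ncard_le_ncard_edgeSet_add_one (hS : G.support ⊆ S) (hne : S.Nonempty)
    (hconn : ∀ u v, u ∈ S → v ∈ S → G.Reachable u v) : S.ncard ≤ G.edgeSet.ncard + 1 := by
  have hind : (G.induce S).Connected := (connected_iff _).2
    ⟨fun a b => reachable_induce_of_reachable hS a.2 b.2 (hconn a b a.2 b.2), hne.to_subtype⟩
  simpa only [Nat.card_coe_set_eq, ncard_edgeSet_induce hS] using
    hind.card_vert_le_card_edgeSet_add_one

lemma ncard_edgeSet_sup_edge [Finite V] (huv : ¬G.Reachable u v) :
    (G ⊔ edge u v).edgeSet.ncard = G.edgeSet.ncard + 1 := by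
  have hne : u ≠ v := fun h => huv (h ▸ Reachable.refl u)
  rw [edgeSet_sup, edgeSet_edge_of_ne hne, Set.union_singleton]
  exact Set.ncard_insert_of_notMem fun hadj => huv (Adj.reachable hadj)

lemma support_sup_edge_subset (hS : G.support ⊆ S) (hu : u ∈ S) (hv : v ∈ S) :
    (G ⊔ edge u v).support ⊆ S := by
  rintro a ⟨b, hab | hab⟩
  · exact hS ⟨b, hab⟩
  · rcases ((edge_adj ..).1 hab).1 with ⟨rfl, -⟩ | ⟨rfl, -⟩
    exacts [hu, hv]

lemma reachable_or_of_sup_edge (h : (G ⊔ edge u v).Reachable u w) :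
    G.Reachable u w ∨ G.Reachable v w := by
  rw [reachable_iff_reflTransGen] at h
  induction h with
  | refl => exact Or.inl (Reachable.refl u)
  | tail _ hadj ih =>
    rcases hadj with hadj | hadj
    · exact ih.imp (·.trans hadj.reachable) (·.trans hadj.reachable)
    · rcases ((edge_adj ..).1 hadj).1 with ⟨-, rfl⟩ | ⟨-, rfl⟩
      exacts [Or.inr (Reachable.refl _), Or.inl (Reachable.refl _)]

lemma ncard_edgeSet_add_two_le [Finite V] (hG : G.IsAcyclic) (hS : G.support ⊆ S) (hu : u ∈ S)
    (hv : v ∈ S) (huv : ¬G.Reachable u v) : G.edgeSet.ncard + 2 ≤ S.ncard := by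
  have := ncard_edgeSet_add_one_le (hG.sup_edge_of_not_reachable huv)
    (support_sup_edge_subset hS hu hv) ⟨u, hu⟩
  rwa [ncard_edgeSet_sup_edge huv] at this

lemma ncard_edgeSet_add_three_le [Finite V] (hG : G.IsAcyclic) (hS : G.support ⊆ S) (hu : u ∈ S)
    (hv : v ∈ S) (hw : w ∈ S) (huv : ¬G.Reachable u v) (huw : ¬G.Reachable u w)
    (hvw : ¬G.Reachable v w) : G.edgeSet.ncard + 3 ≤ S.ncard := by
  have := ncard_edgeSet_add_two_le (hG.sup_edge_of_not_reachable huv)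
    (support_sup_edge_subset hS hu hv) hu hw
    fun h => (reachable_or_of_sup_edge h).elim huw hvw
  rwa [ncard_edgeSet_sup_edge huv] at this

lemma ncard_edgeSet_eq_sum {α β : Type*} [Fintype α] [Finite β] {G : SimpleGraph (α ⊕ β)}
    (hG : G ≤ completeBipartiteGraph α β) :
    G.edgeSet.ncard = ∑ i, {j | G.Adj (Sum.inl i) (Sum.inr j)}.ncard := by
  let f : (Σ i, {j | G.Adj (Sum.inl i) (Sum.inr j)}) → G.edgeSet :=
    fun p => ⟨s(Sum.inl p.1, Sum.inr p.2.1), p.2.2⟩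
  have hf : f.Bijective := by
    refine ⟨fun ⟨i, j, hj⟩ ⟨i', j', hj'⟩ h => ?_, ?_⟩
    · have hs : s(Sum.inl i, Sum.inr j) = s(Sum.inl i', Sum.inr j') := congrArg Subtype.val h
      obtain ⟨rfl, rfl⟩ : i = i' ∧ j = j' := by simpa using hs
      rfl
    · rintro ⟨e, he⟩
      induction e with | _ a b
      rcases a with i | j <;> rcases b with i' | j'
      · simpa using hG he
      · exact ⟨⟨i, j', he⟩, rfl⟩
      · exact ⟨⟨i', j, G.adj_symm he⟩, Subtype.ext Sym2.eq_swap⟩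
      · simpa using hG he
  rw [← Nat.card_coe_set_eq, ← Nat.card_eq_of_bijective f hf, Nat.card_sigma]
  simp only [Nat.card_coe_set_eq]

end ForestCount

section SumOfBounded

variable {ι : Type*} {s : Finset ι} {f : ι → ℕ} {c : ℕ}

lemma forall_eq_of_sum_eq_card_mul (hc : ∀ i ∈ s, c ≤ f i) (hsum : ∑ i ∈ s, f i = #s * c) :
    ∀ i ∈ s, f i = c := fun i hi =>
  ((sum_eq_sum_iff_of_le hc).1 (by rw [hsum, sum_const, smul_eq_mul]) i hi).symm

lemma exists_eq_add_one_of_sum_eq_card_mul_add_one (hc : ∀ i ∈ s, c ≤ f i)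
    (hsum : ∑ i ∈ s, f i = #s * c + 1) :
    ∃ k ∈ s, f k = c + 1 ∧ ∀ i ∈ s, i ≠ k → f i = c := by
  obtain ⟨k, hk, hlt⟩ : ∃ k ∈ s, c < f k := exists_lt_of_sum_lt (by
    rw [hsum, sum_const, smul_eq_mul]
    exact Nat.lt_succ_self _)
  have hc' : ∀ i ∈ s.erase k, c ≤ f i := fun i hi => hc i (mem_of_mem_erase hi)
  have hle : #(s.erase k) * c ≤ ∑ i ∈ s.erase k, f i := card_nsmul_le_sum _ _ _ hc'
  have hsplit := add_sum_erase s f hk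
  have hcard : #s * c = #(s.erase k) * c + c := by rw [← card_erase_add_one hk, add_one_mul]
  exact ⟨k, hk, by omega, fun i hi hik =>
    forall_eq_of_sum_eq_card_mul hc' (by omega) i (mem_erase.2 ⟨hik, hi⟩)⟩

end SumOfBounded

section TangentCount

variable {m n : ℕ} {Wp Wn : Fin m → Fin (n + 1) → TT} {K : Finset (Fin m)}
  {x : Fin (n + 1) → ℝ} {i : Fin m} {j : Fin (n + 1)}

/-- The set of hyperplane nodes of the tangent graph at `x`. -/
def hypNodes (Wp Wn : Fin m → Fin (n + 1) → TT) (x : Fin (n + 1) → ℝ) : Finset (Fin m) :=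
  univ.filter (isHypNode Wp Wn x)

/-- The degree of the hyperplane node `i` in the tangent graph at `x`; it is `0` when `i` is not a
node of that graph. -/
def hypDeg (Wp Wn : Fin m → Fin (n + 1) → TT) (x : Fin (n + 1) → ℝ) (i : Fin m) : ℕ :=
  (degIn Wp Wn x i).ncard + (degOut Wp Wn x i).ncard

/-- The tangent graph at `x` connects all coordinate and hyperplane nodes. -/
def TangentConnected (Wp Wn : Fin m → Fin (n + 1) → TT) (x : Fin (n + 1) → ℝ) : Prop :=
  ∀ u v, u ∈ suppV Wp Wn x → v ∈ suppV Wp Wn x → (tangentGraph Wp Wn x).Reachable u v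

lemma mem_hypNodes : i ∈ hypNodes Wp Wn x ↔ isHypNode Wp Wn x i := mem_filter_univ i

lemma subset_hypNodes (hrow : HasNonzeroRows Wp Wn) (hx : toT x ∈ edgeEK Wp Wn K) :
    K ⊆ hypNodes Wp Wn x := fun i hi =>
  mem_hypNodes.2 ((isHypNode_iff hrow).2 (hx.1 i hi))

lemma isTEdge_iff : isTEdge Wp Wn x i j ↔ j ∈ degIn Wp Wn x i ∨ j ∈ degOut Wp Wn x i := by
  refine ⟨fun h => ?_, fun h => h.elim And.left And.left⟩
  have hne : ¬(Wp i j = ⊥ ∧ Wn i j = ⊥) := fun hbot => tmod_ne_bot_of_isTEdge h (max_eq_bot.2 hbot)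
  exact (not_and_or.1 hne).imp (fun hp => ⟨h, hp⟩) fun hn => ⟨h, hn⟩

lemma disjoint_degIn_degOut (hsign : IsSigned Wp Wn) :
    Disjoint (degIn Wp Wn x i) (degOut Wp Wn x i) :=
  Set.disjoint_left.2 fun j hin hout => (min_eq_bot.1 (hsign i j)).elim hin.2 hout.2

lemma degIn_nonempty (hsign : IsSigned Wp Wn) (hi : isHypNode Wp Wn x i) :
    (degIn Wp Wn x i).Nonempty := by
  obtain ⟨j, -, hj⟩ := (tdotOn_pos_eq_tdot_iff (J := univ) hsign hi).1 rfl
  exact ⟨j, hj⟩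

lemma degOut_nonempty (hsign : IsSigned Wp Wn) (hi : isHypNode Wp Wn x i) :
    (degOut Wp Wn x i).Nonempty := by
  obtain ⟨j, -, hj⟩ := (tdotOn_neg_eq_tdot_iff (J := univ) hsign hi).1 rfl
  exact ⟨j, hj⟩

lemma one_le_ncard_degIn (hsign : IsSigned Wp Wn) (hi : isHypNode Wp Wn x i) :
    1 ≤ (degIn Wp Wn x i).ncard :=
  (Set.ncard_pos (Set.toFinite _)).2 (degIn_nonempty hsign hi)

lemma one_le_ncard_degOut (hsign : IsSigned Wp Wn) (hi : isHypNode Wp Wn x i) :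
    1 ≤ (degOut Wp Wn x i).ncard :=
  (Set.ncard_pos (Set.toFinite _)).2 (degOut_nonempty hsign hi)

lemma two_le_hypDeg (hsign : IsSigned Wp Wn) (hi : isHypNode Wp Wn x i) :
    2 ≤ hypDeg Wp Wn x i :=
  add_le_add (one_le_ncard_degIn hsign hi) (one_le_ncard_degOut hsign hi)

lemma hypDeg_eq_zero (hi : ¬isHypNode Wp Wn x i) : hypDeg Wp Wn x i = 0 := by
  rw [hypDeg, Set.eq_empty_of_forall_notMem fun j (hj : j ∈ degIn Wp Wn x i) => hi hj.1.1,
    Set.eq_empty_of_forall_notMem fun j (hj : j ∈ degOut Wp Wn x i) => hi hj.1.1, Set.ncard_empty]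

lemma existsUnique_mem_of_ncard_eq_one {α : Type*} {s : Set α} (h : s.ncard = 1) :
    ∃! a, a ∈ s := by
  obtain ⟨a, rfl⟩ := Set.ncard_eq_one.1 h
  exact ⟨a, rfl, fun _ => id⟩

lemma deg11_of_hypDeg_eq_two (hsign : IsSigned Wp Wn) (hi : isHypNode Wp Wn x i)
    (h : hypDeg Wp Wn x i = 2) : deg11 Wp Wn x i := by
  have hin := one_le_ncard_degIn hsign hi
  have hout := one_le_ncard_degOut hsign hi
  rw [hypDeg] at h
  exact ⟨existsUnique_mem_of_ncard_eq_one (by omega), existsUnique_mem_of_ncard_eq_one (by omega)⟩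

lemma deg21_or_deg12_of_hypDeg_eq_three (hsign : IsSigned Wp Wn) (hi : isHypNode Wp Wn x i)
    (h : hypDeg Wp Wn x i = 3) : deg21 Wp Wn x i ∨ deg12 Wp Wn x i := by
  have hin := one_le_ncard_degIn hsign hi
  have hout := one_le_ncard_degOut hsign hi
  rw [hypDeg] at h
  rcases hout.eq_or_lt with h1 | h2
  · exact Or.inl ⟨by omega, existsUnique_mem_of_ncard_eq_one h1.symm⟩
  · exact Or.inr ⟨existsUnique_mem_of_ncard_eq_one (by omega), by omega⟩

lemma ncard_edgeSet_tangentGraph (hsign : IsSigned Wp Wn) :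
    (tangentGraph Wp Wn x).edgeSet.ncard = ∑ i ∈ hypNodes Wp Wn x, hypDeg Wp Wn x i := by
  rw [ncard_edgeSet_eq_sum tangentGraph_le_completeBipartiteGraph,
    sum_subset (subset_univ (hypNodes Wp Wn x)) fun i _ hi => hypDeg_eq_zero (mt mem_hypNodes.2 hi)]
  refine sum_congr rfl fun i _ => ?_
  rw [hypDeg, ← Set.ncard_union_eq (disjoint_degIn_degOut hsign)]
  simp only [tangentGraph_adj, isTEdge_iff]
  rfl

lemma ncard_suppV : (suppV Wp Wn x).ncard = #(hypNodes Wp Wn x) + (n + 1) := by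
  have h : suppV Wp Wn x = ↑((hypNodes Wp Wn x).disjSum (univ : Finset (Fin (n + 1)))) := by
    ext (i | j)
    · exact mem_hypNodes.symm.trans inl_mem_disjSum.symm
    · exact ⟨fun _ => inr_mem_disjSum.2 (mem_univ j), fun _ => trivial⟩
  rw [h, Set.ncard_coe_finset, card_disjSum, card_univ, Fintype.card_fin]

lemma support_tangentGraph_subset : (tangentGraph Wp Wn x).support ⊆ suppV Wp Wn x := by
  rintro (i | j) ⟨v, hv⟩
  · rcases v with i' | j
    · simpa using tangentGraph_le_completeBipartiteGraph (x := x) (Wp := Wp) (Wn := Wn) hv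
    · exact (tangentGraph_adj.1 hv).1
  · trivial

lemma inr_mem_suppV : Sum.inr j ∈ suppV Wp Wn x := trivial

lemma exists_reachable_inr (hsign : IsSigned Wp Wn) {w : TGV m n} (hw : w ∈ suppV Wp Wn x) :
    ∃ j, (tangentGraph Wp Wn x).Reachable w (Sum.inr j) := by
  rcases w with i | j
  · obtain ⟨j, hj⟩ := degIn_nonempty hsign hw
    exact ⟨j, (tangentGraph_adj.2 hj.1).reachable⟩
  · exact ⟨j, SimpleGraph.Reachable.refl _⟩

lemma sum_hypDeg_le (hsign : IsSigned Wp Wn) (hgen : TropGeneric (tmod Wp Wn)) :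
    ∑ i ∈ hypNodes Wp Wn x, hypDeg Wp Wn x i ≤ #(hypNodes Wp Wn x) + n := by
  have := ncard_edgeSet_add_one_le (isAcyclic_tangentGraph hgen) support_tangentGraph_subset
    ⟨_, inr_mem_suppV (Wp := Wp) (Wn := Wn) (x := x) (j := 0)⟩
  rw [ncard_edgeSet_tangentGraph hsign, ncard_suppV] at this
  omega

lemma card_hypNodes_mul_two_le (hsign : IsSigned Wp Wn) :
    #(hypNodes Wp Wn x) * 2 ≤ ∑ i ∈ hypNodes Wp Wn x, hypDeg Wp Wn x i :=
  card_nsmul_le_sum _ _ _ fun _ hi => two_le_hypDeg hsign (mem_hypNodes.1 hi)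

lemma forall_deg11_of_sum_hypDeg_eq (hsign : IsSigned Wp Wn)
    (h : ∑ i ∈ hypNodes Wp Wn x, hypDeg Wp Wn x i = #(hypNodes Wp Wn x) * 2) :
    ∀ i, isHypNode Wp Wn x i → deg11 Wp Wn x i := fun i hi =>
  deg11_of_hypDeg_eq_two hsign hi <| forall_eq_of_sum_eq_card_mul
    (fun _ hk => two_le_hypDeg hsign (mem_hypNodes.1 hk)) h i (mem_hypNodes.2 hi)

lemma exists_deg21_or_deg12_of_sum_hypDeg_eq (hsign : IsSigned Wp Wn)
    (h : ∑ i ∈ hypNodes Wp Wn x, hypDeg Wp Wn x i = #(hypNodes Wp Wn x) * 2 + 1) :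
    ∃ k, isHypNode Wp Wn x k ∧ (deg21 Wp Wn x k ∨ deg12 Wp Wn x k) ∧
      ∀ i, isHypNode Wp Wn x i → i ≠ k → deg11 Wp Wn x i := by
  obtain ⟨k, hk, hthree, htwo⟩ := exists_eq_add_one_of_sum_eq_card_mul_add_one
    (fun _ hi => two_le_hypDeg hsign (mem_hypNodes.1 hi)) h
  have hk' := mem_hypNodes.1 hk
  exact ⟨k, hk', deg21_or_deg12_of_hypDeg_eq_three hsign hk' hthree, fun i hi hik =>
    deg11_of_hypDeg_eq_two hsign hi (htwo i (mem_hypNodes.2 hi) hik)⟩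

lemma tangentConnected_of_sum_hypDeg_eq (hsign : IsSigned Wp Wn)
    (hgen : TropGeneric (tmod Wp Wn))
    (h : ∑ i ∈ hypNodes Wp Wn x, hypDeg Wp Wn x i = #(hypNodes Wp Wn x) + n) :
    TangentConnected Wp Wn x := by
  intro u v hu hv
  by_contra huv
  have := ncard_edgeSet_add_two_le (isAcyclic_tangentGraph hgen) support_tangentGraph_subset
    hu hv huv
  rw [ncard_edgeSet_tangentGraph hsign, ncard_suppV] at this
  omega

lemma exists_two_components_of_sum_hypDeg_eq (hsign : IsSigned Wp Wn)
    (hgen : TropGeneric (tmod Wp Wn))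
    (h : ∑ i ∈ hypNodes Wp Wn x, hypDeg Wp Wn x i + 1 = #(hypNodes Wp Wn x) + n) :
    ∃ a b, ¬(tangentGraph Wp Wn x).Reachable (Sum.inr a) (Sum.inr b) ∧
      ∀ w ∈ suppV Wp Wn x, (tangentGraph Wp Wn x).Reachable (Sum.inr a) w ∨
        (tangentGraph Wp Wn x).Reachable (Sum.inr b) w := by
  obtain ⟨u, v, hu, hv, huv⟩ : ∃ u v, u ∈ suppV Wp Wn x ∧ v ∈ suppV Wp Wn x ∧
      ¬(tangentGraph Wp Wn x).Reachable u v := by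
    by_contra! hconn
    have := ncard_le_ncard_edgeSet_add_one support_tangentGraph_subset
      ⟨_, inr_mem_suppV (j := 0)⟩ hconn
    rw [ncard_edgeSet_tangentGraph hsign, ncard_suppV] at this
    omega
  obtain ⟨a, ha⟩ := exists_reachable_inr hsign hu
  obtain ⟨b, hb⟩ := exists_reachable_inr hsign hv
  have hab : ¬(tangentGraph Wp Wn x).Reachable (Sum.inr a) (Sum.inr b) := fun hab =>
    huv (ha.trans (hab.trans hb.symm))
  refine ⟨a, b, hab, fun w hw => ?_⟩
  by_contra! hnot
  have := ncard_edgeSet_add_three_le (isAcyclic_tangentGraph hgen) support_tangentGraph_subset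
    inr_mem_suppV inr_mem_suppV hw hab hnot.1 hnot.2
  rw [ncard_edgeSet_tangentGraph hsign, ncard_suppV] at this
  omega

theorem tangentGraph_trichotomy (hsign : IsSigned Wp Wn) (hrow : HasNonzeroRows Wp Wn)
    (hgen : TropGeneric (tmod Wp Wn)) (hK : #K + 1 = n) (hx : toT x ∈ edgeEK Wp Wn K) :
    (∃ ℓ ∉ K, (∀ i, isHypNode Wp Wn x i ↔ i ∈ insert ℓ K) ∧ TangentConnected Wp Wn x ∧
      ∀ i, isHypNode Wp Wn x i → deg11 Wp Wn x i) ∨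
    ((∀ i, isHypNode Wp Wn x i ↔ i ∈ K) ∧ (∀ i, isHypNode Wp Wn x i → deg11 Wp Wn x i) ∧
      ∃ a b, ¬(tangentGraph Wp Wn x).Reachable (Sum.inr a) (Sum.inr b) ∧
        ∀ w ∈ suppV Wp Wn x, (tangentGraph Wp Wn x).Reachable (Sum.inr a) w ∨
          (tangentGraph Wp Wn x).Reachable (Sum.inr b) w) ∨
    ((∀ i, isHypNode Wp Wn x i ↔ i ∈ K) ∧ TangentConnected Wp Wn x ∧
      ∃ k ∈ K, (deg21 Wp Wn x k ∨ deg12 Wp Wn x k) ∧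
        ∀ i, isHypNode Wp Wn x i → i ≠ k → deg11 Wp Wn x i) := by
  have hsub := subset_hypNodes hrow hx
  have hcard := card_le_card hsub
  have hlower := card_hypNodes_mul_two_le (x := x) hsign
  have hupper := sum_hypDeg_le (x := x) hsign hgen
  rcases hcard.eq_or_lt with heq | hlt
  · have hmem : ∀ i, isHypNode Wp Wn x i ↔ i ∈ K := fun i => by
      rw [← mem_hypNodes, eq_of_subset_of_card_le hsub heq.ge]
    rcases hlower.eq_or_lt with htwo | hmore
    · exact Or.inr (Or.inl ⟨hmem, forall_deg11_of_sum_hypDeg_eq hsign htwo.symm,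
        exists_two_components_of_sum_hypDeg_eq hsign hgen (by omega)⟩)
    · obtain ⟨k, hk, hdeg⟩ := exists_deg21_or_deg12_of_sum_hypDeg_eq hsign (x := x) (by omega)
      exact Or.inr (Or.inr ⟨hmem, tangentConnected_of_sum_hypDeg_eq hsign hgen (by omega), k,
        (hmem k).1 hk, hdeg⟩)
  · obtain ⟨ℓ, hℓ, heq⟩ := exists_eq_insert_iff.2 ⟨hsub, show #K + 1 = _ by omega⟩
    exact Or.inl ⟨ℓ, hℓ, fun i => by rw [heq, mem_hypNodes],
      tangentConnected_of_sum_hypDeg_eq hsign hgen (by omega),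
      forall_deg11_of_sum_hypDeg_eq hsign (by omega)⟩

end TangentCount

section Components

open SimpleGraph

variable {V : Type*} {G : SimpleGraph V} {k a b w : V}

lemma reachable_iff_of_two_components {u v : V} (hu : G.Reachable a u ∨ G.Reachable b u)
    (hv : G.Reachable a v ∨ G.Reachable b v) :
    G.Reachable u v ↔ (G.Reachable a u ↔ G.Reachable a v) := by
  refine ⟨fun h => ⟨fun hau => hau.trans h, fun hav => hav.trans h.symm⟩, fun h => ?_⟩
  by_cases hau : G.Reachable a u
  · exact hau.symm.trans (h.1 hau)
  · exact (hu.resolve_left hau).symm.trans (hv.resolve_left (mt h.2 hau))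

lemma deleteIncidenceSet_le_deleteEdges : G.deleteIncidenceSet k ≤ G.deleteEdges {s(k, a)} := by
  intro u v huv
  obtain ⟨hadj, huk, hvk⟩ := deleteIncidenceSet_adj.1 huv
  refine deleteEdges_adj.2 ⟨hadj, fun he => ?_⟩
  rcases Sym2.eq_iff.1 (Set.mem_singleton_iff.1 he) with ⟨h, -⟩ | ⟨-, h⟩
  exacts [huk h, hvk h]

lemma eq_of_reachable_deleteIncidenceSet (hG : G.IsAcyclic) (ha : G.Adj k a) (hb : G.Adj k b)
    (h : (G.deleteIncidenceSet k).Reachable a b) : a = b := by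
  by_contra hab
  have hkb : (G.deleteEdges {s(k, a)}).Adj k b :=
    deleteEdges_adj.2 ⟨hb, fun he => hab (Sym2.congr_right.1 (Set.mem_singleton_iff.1 he)).symm⟩
  exact isBridge_iff.1 (isAcyclic_iff_forall_adj_isBridge.1 hG ha)
    (hkb.reachable.trans (h.symm.mono deleteIncidenceSet_le_deleteEdges))

lemma exists_adj_reachable_deleteIncidenceSet (h : G.Reachable k w) (hne : w ≠ k) :
    ∃ a, G.Adj k a ∧ (G.deleteIncidenceSet k).Reachable a w := by
  rw [reachable_iff_reflTransGen] at h
  induction h with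
  | refl => exact absurd rfl hne
  | @tail u w _ hadj ih =>
    by_cases hu : u = k
    · exact ⟨w, hu ▸ hadj, Reachable.refl w⟩
    · obtain ⟨a, ha, hreach⟩ := ih hu
      exact ⟨a, ha, hreach.trans (deleteIncidenceSet_adj.2 ⟨hadj, hu, hne⟩).reachable⟩

lemma reachable_deleteEdges_iff (hG : G.IsAcyclic) (ha : G.Adj k a) (hw : G.Reachable k w)
    (hne : w ≠ k) :
    (G.deleteEdges {s(k, a)}).Reachable k w ↔ ¬(G.deleteIncidenceSet k).Reachable a w := by
  refine ⟨fun hkw haw => ?_, fun haw => ?_⟩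
  · exact isBridge_iff.1 (isAcyclic_iff_forall_adj_isBridge.1 hG ha)
      (hkw.trans (haw.symm.mono deleteIncidenceSet_le_deleteEdges))
  · obtain ⟨b, hb, hbw⟩ := exists_adj_reachable_deleteIncidenceSet hw hne
    have hkb : (G.deleteEdges {s(k, a)}).Adj k b := deleteEdges_adj.2 ⟨hb, fun he =>
      haw (Sym2.congr_right.1 (Set.mem_singleton_iff.1 he) ▸ hbw)⟩
    exact hkb.reachable.trans (hbw.mono deleteIncidenceSet_le_deleteEdges)

end Components

section ComponentUnion

variable {α β : Type*} {H : SimpleGraph (α ⊕ β)} {J J' : Finset β} {N : Set β} {j j' a b : β}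

/-- The set `J` of right vertices is the trace of a union of connected components of `H`. -/
def IsComponentUnion (H : SimpleGraph (α ⊕ β)) (J : Finset β) : Prop :=
  ∀ j j', H.Reachable (Sum.inr j) (Sum.inr j') → j ∈ J → j' ∈ J

/-- The set `N` of right vertices meets each connected component of `H` that contains a right
vertex in exactly one point. -/
def IsTransversal (H : SimpleGraph (α ⊕ β)) (N : Set β) : Prop :=
  (∀ j, ∃ a ∈ N, H.Reachable (Sum.inr a) (Sum.inr j)) ∧
    ∀ a ∈ N, ∀ b ∈ N, H.Reachable (Sum.inr a) (Sum.inr b) → a = b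

/-- The right vertices in the connected component of the right vertex `a`. -/
def rightComponent [Fintype β] (H : SimpleGraph (α ⊕ β)) (a : β) : Finset β :=
  univ.filter fun j => H.Reachable (Sum.inr a) (Sum.inr j)

lemma mem_rightComponent [Fintype β] :
    j ∈ rightComponent H a ↔ H.Reachable (Sum.inr a) (Sum.inr j) := mem_filter_univ j

lemma isComponentUnion_rightComponent [Fintype β] : IsComponentUnion H (rightComponent H a) :=
  fun _ _ h hj => mem_rightComponent.2 ((mem_rightComponent.1 hj).trans h)

lemma IsComponentUnion.mem_iff (hJ : IsComponentUnion H J)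
    (h : H.Reachable (Sum.inr j) (Sum.inr j')) : j ∈ J ↔ j' ∈ J :=
  ⟨hJ j j' h, hJ j' j h.symm⟩

lemma IsComponentUnion.compl [Fintype β] [DecidableEq β] (hJ : IsComponentUnion H J) :
    IsComponentUnion H Jᶜ :=
  fun j j' h hj => mem_compl.2 fun hj' => mem_compl.1 hj (hJ j' j h.symm hj')

lemma IsComponentUnion.eq_of_transversal (hJ : IsComponentUnion H J) (hJ' : IsComponentUnion H J')
    (hN : IsTransversal H N) (h : ∀ a ∈ N, a ∈ J ↔ a ∈ J') : J = J' := by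
  ext j
  obtain ⟨a, ha, hreach⟩ := hN.1 j
  rw [← hJ.mem_iff hreach, ← hJ'.mem_iff hreach, h a ha]

lemma IsComponentUnion.ne_empty_iff (hJ : IsComponentUnion H J) (hN : IsTransversal H N) :
    J ≠ ∅ ↔ ∃ a ∈ N, a ∈ J := by
  refine ⟨fun hne => ?_, fun ⟨a, _, ha⟩ => ne_empty_of_mem ha⟩
  obtain ⟨j, hj⟩ := nonempty_iff_ne_empty.2 hne
  obtain ⟨a, ha, hreach⟩ := hN.1 j
  exact ⟨a, ha, (hJ.mem_iff hreach).2 hj⟩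

lemma IsComponentUnion.ne_univ_iff [Fintype β] (hJ : IsComponentUnion H J)
    (hN : IsTransversal H N) : J ≠ univ ↔ ∃ a ∈ N, a ∉ J := by
  rw [← (compl_eq_empty_iff J).ne, hJ.compl.ne_empty_iff hN]
  simp only [mem_compl]

lemma eq_rightComponent_iff [Fintype β] (hN : IsTransversal H N) (ha : a ∈ N) :
    J = rightComponent H a ↔ IsComponentUnion H J ∧ ∀ b ∈ N, b ∈ J ↔ b = a := by
  have hmem : ∀ b ∈ N, b ∈ rightComponent H a ↔ b = a := fun b hb =>
    mem_rightComponent.trans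
      ⟨fun h => (hN.2 a ha b hb h).symm, fun h => h ▸ SimpleGraph.Reachable.refl _⟩
  refine ⟨fun h => h ▸ ⟨isComponentUnion_rightComponent, hmem⟩, fun ⟨hJ, h⟩ => ?_⟩
  exact hJ.eq_of_transversal isComponentUnion_rightComponent hN fun b hb =>
    (h b hb).trans (hmem b hb).symm

lemma eq_compl_rightComponent_iff [Fintype β] [DecidableEq β] (hN : IsTransversal H N)
    (ha : a ∈ N) :
    J = (rightComponent H a)ᶜ ↔ IsComponentUnion H J ∧ ∀ b ∈ N, b ∈ J ↔ b ≠ a := by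
  rw [eq_compl_comm, eq_comm, eq_rightComponent_iff hN ha]
  refine and_congr ⟨fun h => compl_compl J ▸ h.compl, fun h => h.compl⟩
    (forall₂_congr fun b _ => ?_)
  rw [mem_compl, not_iff_comm]
  exact iff_comm

lemma isTransversal_pair (hab : ¬H.Reachable (Sum.inr a) (Sum.inr b))
    (hcover : ∀ j, H.Reachable (Sum.inr a) (Sum.inr j) ∨ H.Reachable (Sum.inr b) (Sum.inr j)) :
    IsTransversal H {a, b} := by
  refine ⟨fun j => ?_, ?_⟩
  · rcases hcover j with h | h
    exacts [⟨a, Or.inl rfl, h⟩, ⟨b, Or.inr rfl, h⟩]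
  · rintro c (rfl | rfl) d (rfl | rfl) h
    exacts [rfl, absurd h hab, absurd h.symm hab, rfl]

lemma eq_rightComponent_or_eq_compl_iff [Fintype β] [DecidableEq β] (hab : a ≠ b)
    (hN : IsTransversal H {a, b}) :
    J = rightComponent H a ∨ J = (rightComponent H a)ᶜ ↔
      J ≠ ∅ ∧ J ≠ univ ∧ IsComponentUnion H J := by
  have ha : a ∈ ({a, b} : Set β) := Or.inl rfl
  rw [eq_rightComponent_iff hN ha, eq_compl_rightComponent_iff hN ha, ← and_or_left,
    ← and_assoc (a := J ≠ ∅), and_comm (b := IsComponentUnion H J)]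
  refine and_congr_right fun hJ => ?_
  rw [hJ.ne_empty_iff hN, hJ.ne_univ_iff hN]
  simp only [Set.mem_insert_iff, Set.mem_singleton_iff, or_and_right, exists_or, exists_eq_left,
    forall_eq_or_imp, forall_eq]
  grind

lemma isComponentUnion_iff (hH : H ≤ completeBipartiteGraph α β) :
    IsComponentUnion H J ↔ ∀ i j j', H.Adj (Sum.inl i) (Sum.inr j) →
      H.Adj (Sum.inl i) (Sum.inr j') → j ∈ J → j' ∈ J := by
  refine ⟨fun hJ i j j' hj hj' => hJ j j' (hj.symm.reachable.trans hj'.reachable),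
    fun hJ j j' h hj => ?_⟩
  let touches : α ⊕ β → Prop :=
    Sum.elim (fun i => ∃ j ∈ J, H.Adj (Sum.inl i) (Sum.inr j)) (· ∈ J)
  suffices ∀ v, H.Reachable (Sum.inr j) v → touches v from this _ h
  intro v hv
  rw [SimpleGraph.reachable_iff_reflTransGen] at hv
  induction hv with
  | refl => exact hj
  | @tail u v _ hadj ih =>
    rcases u with i | a <;> rcases v with i' | a'
    · simpa using hH hadj
    · obtain ⟨a, ha, hia⟩ := ih
      exact hJ i a a' hia hadj ha
    · exact ⟨a, ih, hadj.symm⟩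
    · simpa using hH hadj

end ComponentUnion

section FeasibleDirections

variable {m n : ℕ} {Wp Wn : Fin m → Fin (n + 1) → TT} {K : Finset (Fin m)}
  {x : Fin (n + 1) → ℝ} {J : Finset (Fin (n + 1))} {i k ℓ : Fin m} {j j₁ j₂ j₃ a b : Fin (n + 1)}

lemma delNode_eq :
    delNode Wp Wn x k = (tangentGraph Wp Wn x).deleteIncidenceSet (Sum.inl k) := by
  ext u v
  rw [SimpleGraph.deleteIncidenceSet_adj]
  rcases u with i | j <;> rcases v with i' | j' <;> simp [delNode, tangentGraph, tedgeRel]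

lemma delEdge_eq :
    delEdge Wp Wn x k j = (tangentGraph Wp Wn x).deleteEdges {s(Sum.inl k, Sum.inr j)} := by
  ext u v
  rw [SimpleGraph.deleteEdges_adj]
  rcases u with i | l <;> rcases v with i' | l' <;>
    simp [delEdge, tangentGraph, tedgeRel, imp_not_comm]

lemma delNode_le_completeBipartiteGraph :
    delNode Wp Wn x k ≤ completeBipartiteGraph (Fin m) (Fin (n + 1)) := by
  rw [delNode_eq]
  exact (SimpleGraph.deleteIncidenceSet_le _ _).trans tangentGraph_le_completeBipartiteGraph

lemma delNode_adj :
    (delNode Wp Wn x k).Adj (Sum.inl i) (Sum.inr j) ↔ isTEdge Wp Wn x i j ∧ i ≠ k := by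
  rw [delNode_eq, SimpleGraph.deleteIncidenceSet_adj, tangentGraph_adj]
  simp

lemma isTransversal_delNode (hgen : TropGeneric (tmod Wp Wn)) (hconn : TangentConnected Wp Wn x)
    (hk : isHypNode Wp Wn x k) : IsTransversal (delNode Wp Wn x k) {j | isTEdge Wp Wn x k j} := by
  rw [delNode_eq]
  constructor
  · intro j
    obtain ⟨v, hv, hreach⟩ :=
      exists_adj_reachable_deleteIncidenceSet (hconn _ _ hk (inr_mem_suppV (j := j))) Sum.inr_ne_inl
    rcases v with i | a
    · simpa using tangentGraph_le_completeBipartiteGraph (x := x) (Wp := Wp) (Wn := Wn) hv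
    · exact ⟨a, tangentGraph_adj.1 hv, hreach⟩
  · intro a ha b hb h
    exact Sum.inr_injective (eq_of_reachable_deleteIncidenceSet (isAcyclic_tangentGraph hgen)
      (tangentGraph_adj.2 ha) (tangentGraph_adj.2 hb) h)

lemma reachJ_eq (hgen : TropGeneric (tmod Wp Wn)) (hconn : TangentConnected Wp Wn x)
    (h : isTEdge Wp Wn x k j) : reachJ Wp Wn x k j = (rightComponent (delNode Wp Wn x k) j)ᶜ := by
  ext l
  rw [reachJ, mem_filter_univ, delEdge_eq, mem_compl, mem_rightComponent, delNode_eq]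
  exact reachable_deleteEdges_iff (isAcyclic_tangentGraph hgen) (tangentGraph_adj.2 h)
    (hconn _ _ h.1 inr_mem_suppV) Sum.inr_ne_inl

lemma mem_reachJ_iff (hgen : TropGeneric (tmod Wp Wn)) (hconn : TangentConnected Wp Wn x)
    (ha : isTEdge Wp Wn x k a) (hb : isTEdge Wp Wn x k b) :
    b ∈ reachJ Wp Wn x k a ↔ b ≠ a := by
  have hN := isTransversal_delNode hgen hconn ha.1
  exact ((eq_compl_rightComponent_iff hN ha).1 (reachJ_eq hgen hconn ha)).2 b hb

lemma compl_reachJ_ssubset (hgen : TropGeneric (tmod Wp Wn)) (hconn : TangentConnected Wp Wn x)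
    (h₁ : isTEdge Wp Wn x k j₁) (h₂ : isTEdge Wp Wn x k j₂) (h₃ : isTEdge Wp Wn x k j₃)
    (h12 : j₁ ≠ j₂) (h13 : j₃ ≠ j₁) (h23 : j₃ ≠ j₂) :
    (reachJ Wp Wn x k j₁)ᶜ ⊂ reachJ Wp Wn x k j₂ := by
  refine (ssubset_iff_of_subset ?_).2 ⟨j₃, (mem_reachJ_iff hgen hconn h₂ h₃).2 h23,
    fun h => mem_compl.1 h ((mem_reachJ_iff hgen hconn h₁ h₃).2 h13)⟩
  rw [reachJ_eq hgen hconn h₁, reachJ_eq hgen hconn h₂, compl_compl]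
  intro l hl
  refine mem_compl.2 fun hl' => h12 ?_
  exact (isTransversal_delNode hgen hconn h₁.1).2 _ h₁ _ h₂
    ((mem_rightComponent.1 hl).trans (mem_rightComponent.1 hl').symm)

lemma isHypNode_of_exists_mem_degIn (h : ∃ j ∈ J, j ∈ degIn Wp Wn x i) : isHypNode Wp Wn x i :=
  let ⟨_, _, hj⟩ := h
  hj.1.1

lemma isHypNode_of_exists_mem_degOut (h : ∃ j ∈ J, j ∈ degOut Wp Wn x i) : isHypNode Wp Wn x i :=
  let ⟨_, _, hj⟩ := h
  hj.1.1

lemma exists_mem_degOut_iff_of_deg11 (h : isHypNode Wp Wn x i → deg11 Wp Wn x i) :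
    ((∃ j ∈ J, j ∈ degOut Wp Wn x i) ↔ ∃ j ∈ J, j ∈ degIn Wp Wn x i) ↔
      ∀ j j', isTEdge Wp Wn x i j → isTEdge Wp Wn x i j' → j ∈ J → j' ∈ J := by
  by_cases hi : isHypNode Wp Wn x i
  · obtain ⟨⟨a, ha⟩, ⟨b, hb⟩⟩ := h hi
    have hin : degIn Wp Wn x i = {a} := Set.eq_singleton_iff_unique_mem.2 ha
    have hout : degOut Wp Wn x i = {b} := Set.eq_singleton_iff_unique_mem.2 hb
    simp only [isTEdge_iff, hin, hout, Set.mem_singleton_iff, exists_eq_right]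
    grind
  · exact iff_of_true (iff_of_false (mt isHypNode_of_exists_mem_degOut hi)
      (mt isHypNode_of_exists_mem_degIn hi)) fun _ _ hj => absurd hj.1 hi

lemma feasible_edgeEK_iff_of_forall_deg11 (hsign : IsSigned Wp Wn) (hrow : HasNonzeroRows Wp Wn)
    (hx : toT x ∈ edgeEK Wp Wn K) (hK : ∀ i, isHypNode Wp Wn x i → i ∈ K)
    (h11 : ∀ i, isHypNode Wp Wn x i → deg11 Wp Wn x i) :
    Feasible (edgeEK Wp Wn K) x J ↔
      J ≠ ∅ ∧ J ≠ univ ∧ IsComponentUnion (tangentGraph Wp Wn x) J := by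
  rw [feasible_edgeEK_iff hsign hrow hx,
    isComponentUnion_iff tangentGraph_le_completeBipartiteGraph]
  simp only [tangentGraph_adj, ← exists_mem_degOut_iff_of_deg11 (h11 _)]
  refine and_congr_right' (and_congr_right' ⟨fun ⟨hout, hin⟩ i => ⟨hout i, fun h => ?_⟩,
    fun h => ⟨fun i => (h i).1, fun i _ => (h i).2⟩⟩)
  exact hin i (hK i (isHypNode_of_exists_mem_degIn h)) h

lemma feasible_edgeEK_iff_of_forall_ne (hsign : IsSigned Wp Wn) (hrow : HasNonzeroRows Wp Wn)
    (hgen : TropGeneric (tmod Wp Wn)) (hx : toT x ∈ edgeEK Wp Wn K)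
    (hconn : TangentConnected Wp Wn x) (hk : isHypNode Wp Wn x k)
    (hne : ∀ i, isHypNode Wp Wn x i → i ≠ k → i ∈ K ∧ deg11 Wp Wn x i) :
    Feasible (edgeEK Wp Wn K) x J ↔ IsComponentUnion (delNode Wp Wn x k) J ∧
      (∃ j, isTEdge Wp Wn x k j ∧ j ∈ J) ∧ (∃ j, isTEdge Wp Wn x k j ∧ j ∉ J) ∧
      ((∃ j ∈ J, j ∈ degOut Wp Wn x k) → ∃ j ∈ J, j ∈ degIn Wp Wn x k) ∧
      (k ∈ K → (∃ j ∈ J, j ∈ degIn Wp Wn x k) → ∃ j ∈ J, j ∈ degOut Wp Wn x k) := by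
  have hN := isTransversal_delNode hgen hconn hk
  have hunion : IsComponentUnion (delNode Wp Wn x k) J ↔ ∀ i ≠ k,
      ((∃ j ∈ J, j ∈ degOut Wp Wn x i) ↔ ∃ j ∈ J, j ∈ degIn Wp Wn x i) := by
    rw [isComponentUnion_iff delNode_le_completeBipartiteGraph]
    refine forall_congr' fun i => ?_
    by_cases hik : i = k
    · simp [delNode_adj, hik]
    · simp [delNode_adj, hik, exists_mem_degOut_iff_of_deg11 fun hi => (hne i hi hik).2]
  rw [feasible_edgeEK_iff hsign hrow hx]
  constructor
  · rintro ⟨h0, h1, hout, hin⟩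
    have hJ := hunion.2 fun i hik =>
      ⟨hout i, fun h => hin i (hne i (isHypNode_of_exists_mem_degIn h) hik).1 h⟩
    exact ⟨hJ, (hJ.ne_empty_iff hN).1 h0, (hJ.ne_univ_iff hN).1 h1, hout k, hin k⟩
  · rintro ⟨hJ, h0, h1, hout, hin⟩
    refine ⟨(hJ.ne_empty_iff hN).2 h0, (hJ.ne_univ_iff hN).2 h1, fun i => ?_, fun i hi => ?_⟩
    · by_cases hik : i = k
      exacts [hik ▸ hout, (hunion.1 hJ i hik).1]
    · by_cases hik : i = k
      exacts [hik ▸ hin (hik ▸ hi), (hunion.1 hJ i hik).2]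

lemma feasible_edgeEK_iff_eq_rightComponent (hsign : IsSigned Wp Wn)
    (hrow : HasNonzeroRows Wp Wn) (hgen : TropGeneric (tmod Wp Wn))
    (hx : toT x ∈ edgeEK Wp Wn K) (hconn : TangentConnected Wp Wn x) (hℓ : ℓ ∉ K)
    (hne : ∀ i, isHypNode Wp Wn x i → i ≠ ℓ → i ∈ K ∧ deg11 Wp Wn x i)
    (hin : degIn Wp Wn x ℓ = {a}) (hout : degOut Wp Wn x ℓ = {b}) :
    Feasible (edgeEK Wp Wn K) x J ↔ J = rightComponent (delNode Wp Wn x ℓ) a := by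
  have ha : a ∈ degIn Wp Wn x ℓ := hin ▸ rfl
  have hab : a ≠ b := by
    simpa [hin, hout] using disjoint_degIn_degOut (x := x) (i := ℓ) hsign
  rw [feasible_edgeEK_iff_of_forall_ne hsign hrow hgen hx hconn ha.1.1 hne,
    eq_rightComponent_iff (isTransversal_delNode hgen hconn ha.1.1) ha.1]
  simp only [isTEdge_iff, hin, hout, Set.mem_singleton_iff, Set.mem_ofPred_eq, exists_eq_right]
  grind

/-- The hyperplane node `k` has exactly three incident arcs in the tangent digraph at `x`: two of
the same orientation, at the coordinate nodes `j₁` and `j₂`, and one of the opposite orientation,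
at `j₃`. -/
def IsTripod (Wp Wn : Fin m → Fin (n + 1) → TT) (x : Fin (n + 1) → ℝ) (k : Fin m)
    (j₁ j₂ j₃ : Fin (n + 1)) : Prop :=
  j₁ ≠ j₂ ∧ (degIn Wp Wn x k = {j₁, j₂} ∧ degOut Wp Wn x k = {j₃} ∨
    degOut Wp Wn x k = {j₁, j₂} ∧ degIn Wp Wn x k = {j₃})

lemma IsTripod.isTEdge_iff (h : IsTripod Wp Wn x k j₁ j₂ j₃) :
    isTEdge Wp Wn x k j ↔ j = j₁ ∨ j = j₂ ∨ j = j₃ := by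
  rw [_root_.isTEdge_iff]
  rcases h.2 with ⟨h, h'⟩ | ⟨h, h'⟩ <;> simp [h, h', or_left_comm, or_comm]

lemma IsTripod.ne (hsign : IsSigned Wp Wn) (h : IsTripod Wp Wn x k j₁ j₂ j₃) :
    j₃ ≠ j₁ ∧ j₃ ≠ j₂ := by
  have hdisj := disjoint_degIn_degOut (x := x) (i := k) hsign
  rcases h.2 with ⟨h, h'⟩ | ⟨h, h'⟩ <;> simpa [h, h', eq_comm] using hdisj

lemma feasible_edgeEK_iff_eq_reachJ (hsign : IsSigned Wp Wn) (hrow : HasNonzeroRows Wp Wn)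
    (hgen : TropGeneric (tmod Wp Wn)) (hx : toT x ∈ edgeEK Wp Wn K)
    (hconn : TangentConnected Wp Wn x) (hk : k ∈ K)
    (hne : ∀ i, isHypNode Wp Wn x i → i ≠ k → i ∈ K ∧ deg11 Wp Wn x i)
    (h : IsTripod Wp Wn x k j₁ j₂ j₃) :
    Feasible (edgeEK Wp Wn K) x J ↔ J = reachJ Wp Wn x k j₁ ∨ J = reachJ Wp Wn x k j₂ := by
  obtain ⟨h31, h32⟩ := h.ne hsign
  have h₁ := h.isTEdge_iff.2 (Or.inl rfl)
  have h₂ := h.isTEdge_iff.2 (Or.inr (Or.inl rfl))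
  have hN := isTransversal_delNode hgen hconn h₁.1
  rw [feasible_edgeEK_iff_of_forall_ne hsign hrow hgen hx hconn h₁.1 hne,
    reachJ_eq hgen hconn h₁, reachJ_eq hgen hconn h₂, eq_compl_rightComponent_iff hN h₁,
    eq_compl_rightComponent_iff hN h₂]
  simp only [h.isTEdge_iff, Set.mem_ofPred_eq]
  obtain ⟨h12, ⟨h, h'⟩ | ⟨h, h'⟩⟩ := h <;>
  · simp only [h, h', Set.mem_singleton_iff, Set.mem_insert_iff, or_and_right, and_or_left,
      exists_or, exists_eq_left, exists_eq_right, forall_eq_or_imp, forall_eq]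
    grind

lemma isBreakpoint_of_isTripod (hsign : IsSigned Wp Wn) (hrow : HasNonzeroRows Wp Wn)
    (hgen : TropGeneric (tmod Wp Wn)) (hfin : HasFiniteCone Wp Wn) (hx : toT x ∈ edgeEK Wp Wn K)
    (hconn : TangentConnected Wp Wn x) (hk : k ∈ K)
    (hne : ∀ i, isHypNode Wp Wn x i → i ≠ k → i ∈ K ∧ deg11 Wp Wn x i)
    (h : IsTripod Wp Wn x k j₁ j₂ j₃) : IsBreakpoint Wp Wn K x := by
  obtain ⟨h31, h32⟩ := h.ne hsign
  have h₁ := h.isTEdge_iff.2 (Or.inl rfl)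
  have h₂ := h.isTEdge_iff.2 (Or.inr (Or.inl rfl))
  have h₃ := h.isTEdge_iff.2 (Or.inr (Or.inr rfl))
  have hiff : ∀ J, Feasible (edgeEK Wp Wn K) x J ↔
      J = reachJ Wp Wn x k j₁ ∨ J = reachJ Wp Wn x k j₂ := fun _ =>
    feasible_edgeEK_iff_eq_reachJ hsign hrow hgen hx hconn hk hne h
  have hmem₁ : j₃ ∈ reachJ Wp Wn x k j₁ := (mem_reachJ_iff hgen hconn h₁ h₃).2 h31
  have hmem₂ : j₃ ∈ reachJ Wp Wn x k j₂ := (mem_reachJ_iff hgen hconn h₂ h₃).2 h32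
  have hcompl : ∀ J, j₃ ∈ J → ¬Feasible (edgeEK Wp Wn K) x Jᶜ := fun J hJ hfeas =>
    ((hiff _).1 hfeas).elim (fun heq => mem_compl.1 (heq ▸ hmem₁) hJ)
      fun heq => mem_compl.1 (heq ▸ hmem₂) hJ
  exact isBreakpoint_of_feasible hfin hx ((hiff _).2 (Or.inl rfl)) (hcompl _ hmem₁)
    ((hiff _).2 (Or.inr rfl)) (hcompl _ hmem₂)
    (compl_reachJ_ssubset hgen hconn h₁ h₂ h₃ h.1 h31 h32)

end FeasibleDirections

section Cases

variable {m n : ℕ} {Wp Wn : Fin m → Fin (n + 1) → TT} {K : Finset (Fin m)}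
  {x : Fin (n + 1) → ℝ} {k ℓ : Fin m} {a b : Fin (n + 1)}

lemma caseBasic_of_tangentConnected (hsign : IsSigned Wp Wn) (hrow : HasNonzeroRows Wp Wn)
    (hgen : TropGeneric (tmod Wp Wn)) (hx : toT x ∈ edgeEK Wp Wn K) (hℓ : ℓ ∉ K)
    (hH : ∀ i, isHypNode Wp Wn x i ↔ i ∈ insert ℓ K) (hconn : TangentConnected Wp Wn x)
    (h11 : ∀ i, isHypNode Wp Wn x i → deg11 Wp Wn x i) : CaseBasic Wp Wn K x := by
  have hℓH : isHypNode Wp Wn x ℓ := (hH ℓ).2 (mem_insert_self ℓ K)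
  obtain ⟨⟨a, ha⟩, ⟨b, hb⟩⟩ := h11 ℓ hℓH
  have hin : degIn Wp Wn x ℓ = {a} := Set.eq_singleton_iff_unique_mem.2 ha
  have hout : degOut Wp Wn x ℓ = {b} := Set.eq_singleton_iff_unique_mem.2 hb
  have hne : ∀ i, isHypNode Wp Wn x i → i ≠ ℓ → i ∈ K ∧ deg11 Wp Wn x i := fun i hi hiℓ =>
    ⟨mem_of_mem_insert_of_ne ((hH i).1 hi) hiℓ, h11 i hi⟩
  refine ⟨ℓ, hℓ, ⟨fun i hi => ((hH i).2 hi).1, hx.2⟩, hH, isAcyclic_tangentGraph hgen, hconn, h11,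
    a, degIn_eq_argmaxP hsign hℓH ▸ hin, fun J => ?_⟩
  rw [feasible_edgeEK_iff_eq_rightComponent hsign hrow hgen hx hconn hℓ hne hin hout,
    Finset.ext_iff, Finset.ext_iff]
  simp only [mem_rightComponent, mem_filter_univ]

lemma caseInterior_of_two_components (hsign : IsSigned Wp Wn) (hrow : HasNonzeroRows Wp Wn)
    (hgen : TropGeneric (tmod Wp Wn)) (hfin : HasFiniteCone Wp Wn) (hx : toT x ∈ edgeEK Wp Wn K)
    (hH : ∀ i, isHypNode Wp Wn x i ↔ i ∈ K) (h11 : ∀ i, isHypNode Wp Wn x i → deg11 Wp Wn x i)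
    (hab : ¬(tangentGraph Wp Wn x).Reachable (Sum.inr a) (Sum.inr b))
    (hcover : ∀ w ∈ suppV Wp Wn x, (tangentGraph Wp Wn x).Reachable (Sum.inr a) w ∨
      (tangentGraph Wp Wn x).Reachable (Sum.inr b) w) : CaseInterior Wp Wn K x := by
  set G := tangentGraph Wp Wn x
  have hne : a ≠ b := fun h => hab (h ▸ SimpleGraph.Reachable.refl _)
  have hiff : ∀ J, Feasible (edgeEK Wp Wn K) x J ↔
      J = rightComponent G a ∨ J = (rightComponent G a)ᶜ := fun J =>
    (feasible_edgeEK_iff_of_forall_deg11 hsign hrow hx (fun i => (hH i).1) h11).trans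
      (eq_rightComponent_or_eq_compl_iff hne
        (isTransversal_pair hab fun _ => hcover _ inr_mem_suppV)).symm
  obtain ⟨S, hS⟩ : ∃ S : Set (TGV m n),
      ∀ w, w ∈ S ↔ w ∈ suppV Wp Wn x ∧ G.Reachable (Sum.inr a) w :=
    ⟨{w ∈ suppV Wp Wn x | G.Reachable (Sum.inr a) w}, fun _ => Iff.rfl⟩
  have hfilter : rightComponent G a = univ.filter fun j => Sum.inr j ∈ S := by
    ext j
    rw [mem_rightComponent, mem_filter_univ, hS, and_iff_right inr_mem_suppV]
  refine ⟨inRelIntSeg_of_feasible hfin hx ((hiff _).2 (Or.inl rfl)) ((hiff _).2 (Or.inr rfl)), hH,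
    isAcyclic_tangentGraph hgen, h11, S, fun w hw => ((hS w).1 hw).1,
    ⟨Sum.inr a, (hS _).2 ⟨inr_mem_suppV, SimpleGraph.Reachable.refl _⟩⟩,
    ⟨Sum.inr b, inr_mem_suppV, fun h => hab ((hS _).1 h).2⟩, fun u v hu hv => ?_,
    fun J => hfilter ▸ hiff J⟩
  rw [reachable_iff_of_two_components (hcover u hu) (hcover v hv), hS, hS, and_iff_right hu,
    and_iff_right hv]

lemma exists_isTripod (h : deg21 Wp Wn x k ∨ deg12 Wp Wn x k) :
    ∃ j₁ j₂ j₃, IsTripod Wp Wn x k j₁ j₂ j₃ ∧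
      ((deg21 Wp Wn x k ∧ degIn Wp Wn x k = {j₁, j₂}) ∨
        (deg12 Wp Wn x k ∧ degOut Wp Wn x k = {j₁, j₂})) := by
  rcases h with h | h
  · obtain ⟨j₁, j₂, h12, hin⟩ := Set.ncard_eq_two.1 h.1
    obtain ⟨j₃, hj₃⟩ := h.2
    exact ⟨j₁, j₂, j₃, ⟨h12, Or.inl ⟨hin, Set.eq_singleton_iff_unique_mem.2 hj₃⟩⟩,
      Or.inl ⟨h, hin⟩⟩
  · obtain ⟨j₁, j₂, h12, hout⟩ := Set.ncard_eq_two.1 h.2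
    obtain ⟨j₃, hj₃⟩ := h.1
    exact ⟨j₁, j₂, j₃, ⟨h12, Or.inr ⟨hout, Set.eq_singleton_iff_unique_mem.2 hj₃⟩⟩,
      Or.inr ⟨h, hout⟩⟩

lemma caseBreak_of_tangentConnected (hsign : IsSigned Wp Wn) (hrow : HasNonzeroRows Wp Wn)
    (hgen : TropGeneric (tmod Wp Wn)) (hfin : HasFiniteCone Wp Wn) (hx : toT x ∈ edgeEK Wp Wn K)
    (hH : ∀ i, isHypNode Wp Wn x i ↔ i ∈ K) (hconn : TangentConnected Wp Wn x) (hk : k ∈ K)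
    (hdeg : deg21 Wp Wn x k ∨ deg12 Wp Wn x k)
    (h11 : ∀ i, isHypNode Wp Wn x i → i ≠ k → deg11 Wp Wn x i) : CaseBreak Wp Wn K x := by
  obtain ⟨j₁, j₂, j₃, htripod, hsame⟩ := exists_isTripod hdeg
  have hne : ∀ i, isHypNode Wp Wn x i → i ≠ k → i ∈ K ∧ deg11 Wp Wn x i := fun i hi hik =>
    ⟨(hH i).1 hi, h11 i hi hik⟩
  exact ⟨isBreakpoint_of_isTripod hsign hrow hgen hfin hx hconn hk hne htripod, hH,
    isAcyclic_tangentGraph hgen, hconn, k, hk, hdeg, h11, j₁, j₂, htripod.1, hsame, fun _ =>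
      feasible_edgeEK_iff_eq_reachJ hsign hrow hgen hx hconn hk hne htripod⟩

lemma CaseBasic.not_forall_isHypNode_iff (h : CaseBasic Wp Wn K x) :
    ¬∀ i, isHypNode Wp Wn x i ↔ i ∈ K := by
  obtain ⟨ℓ, hℓ, -, hH, -⟩ := h
  exact fun hH' => hℓ ((hH' ℓ).1 ((hH ℓ).2 (mem_insert_self ℓ K)))

lemma CaseInterior.not_tangentConnected (h : CaseInterior Wp Wn K x) :
    ¬TangentConnected Wp Wn x := by
  obtain ⟨-, -, -, -, S, hS, ⟨u, hu⟩, ⟨v, hv, hvS⟩, hreach, -⟩ := h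
  exact fun hconn => hvS (((hreach u v (hS hu) hv).1 (hconn u v (hS hu) hv)).1 hu)

end Cases

/-- Trichotomy for points of a tropical edge `E_K`: such a
point is a tropical basic point, a relative-interior point of an ordinary
segment, or a breakpoint, with the corresponding structure of the tangent
(di)graph and of the feasible directions; and exactly one of the three cases
arises. -/
theorem stmt11 {m n : ℕ} (Wp Wn : Fin m → Fin (n + 1) → TT)
    (hsign : ∀ i j, min (Wp i j) (Wn i j) = ⊥)
    (hrow : ∀ i, ∃ j, max (Wp i j) (Wn i j) ≠ ⊥)
    (hgen : TropGeneric (tmod Wp Wn))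
    (hfin : ∀ x ∈ coneC Wp Wn, x ≠ (fun _ => (⊥ : TT)) → ∀ j, x j ≠ ⊥)
    (K : Finset (Fin m)) (hK : K.card + 1 = n)
    (hU : ∃ (er : Fin K.card → Fin m) (ec : Fin K.card → Fin (n + 1)),
      Function.Injective er ∧ (∀ a, er a ∈ K) ∧ Function.Injective ec ∧
      (∀ a, ec a ≠ Fin.last n) ∧ ⊥ < tper (fun a b => tmod Wp Wn (er a) (ec b)))
    (hEK : ∃ y : Fin (n + 1) → ℝ, toT y ∈ edgeEK Wp Wn K)
    (x : Fin (n + 1) → ℝ) (hx : toT x ∈ edgeEK Wp Wn K) :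
    (CaseBasic Wp Wn K x ∨ CaseInterior Wp Wn K x ∨ CaseBreak Wp Wn K x) ∧
    ¬(CaseBasic Wp Wn K x ∧ CaseInterior Wp Wn K x) ∧
    ¬(CaseBasic Wp Wn K x ∧ CaseBreak Wp Wn K x) ∧
    ¬(CaseInterior Wp Wn K x ∧ CaseBreak Wp Wn K x) := by
  refine ⟨?_, fun ⟨hbasic, hinterior⟩ => hbasic.not_forall_isHypNode_iff hinterior.2.1,
    fun ⟨hbasic, hbreak⟩ => hbasic.not_forall_isHypNode_iff hbreak.2.1,
    fun ⟨hinterior, hbreak⟩ => hinterior.not_tangentConnected hbreak.2.2.2.1⟩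
  rcases tangentGraph_trichotomy hsign hrow hgen hK hx with
    ⟨ℓ, hℓ, hH, hconn, h11⟩ | ⟨hH, h11, a, b, hab, hcover⟩ | ⟨hH, hconn, k, hk, hdeg, h11⟩
  · exact Or.inl (caseBasic_of_tangentConnected hsign hrow hgen hx hℓ hH hconn h11)
  · exact Or.inr (Or.inl
      (caseInterior_of_two_components hsign hrow hgen hfin hx hH h11 hab hcover))
  · exact Or.inr (Or.inr
      (caseBreak_of_tangentConnected hsign hrow hgen hfin hx hH hconn hk hdeg h11))
end
end
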